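/- For a prime p and n ≥ 5, the smallest dimension of a nontrivial irreducible complex representation of SL_n(ℤ/pℤ) is (p^n − p)/(p − 1). -/

import Mathlib

open Matrix

/-- A matrix representation `ρ : G →* GL_N(ℂ)` is irreducible if the only invariant
subspaces of `ℂ^N` are `⊥` and `⊤`. -/
def IrredMat {G : Type*} [Group G] {N : ℕ} (ρ : G →* GL (Fin N) ℂ) : Prop :=
  ∀ W : Submodule ℂ (Fin N → ℂ),
    (∀ g : G, ∀ v ∈ W, (ρ g : Matrix (Fin N) (Fin N) ℂ).mulVec v ∈ W) → W = ⊥ ∨ W = ⊤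

/-!
Let `E` have dimension `n` over `F`, let `q = |F|` and let `x ≠ 0`. The transvections in the
direction `x` form an elementary abelian group, so a representation on `V` splits into weight spaces
indexed by `E ⧸ ⟨x⟩`. By transitivity all nonzero weights have the same multiplicity `m`. If
`m = 0`, the transvections, and hence all of `SL(E)`, act trivially; if `m ≥ 2`, counting dimensions
suffices.

Let `m = 1`, and let `P_x` be the projection onto the zero weight space, of rank `d`, so that
`dim V = d + P - 1` with `P = q ^ (n - 1)`. In dimension at least five, enough transvections are
commutators of elements that preserve a given weight line, hence act trivially on it. For
independent `x`, `y` this expresses the trace of `P_x e` through `d`, where `e` projects onto the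
invariants of the unipotent radical attached to the plane `⟨x, y⟩`. The `P_z e` with `z` in this
plane are conjugate under operators commuting with their sum, so on each generalized eigenspace of
that sum they have equal rank; this determines the trace of `P_x P_y` up to a defect `Δ` that is `0`
or at least `1/2`. On the other hand `∑ P_z` over all `z` is a scalar by Schur's lemma, and
comparing the two gives `(d + P - 1) (P - q + (q + 1) Δ) = (q P - 1) d`. Divisibility rules out
`Δ = 0`, and `Δ ≥ 1/2` yields the bound.

Equality holds for the functions of sum zero on the projective space, on which `SL(E)` acts doubly
transitively.
-/

namespace TiepZalesskii

open Module
open scoped commutatorElement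

local notation "SL" => (_root_.SpecialLinearGroup)

/-! ### Projections onto isotypic parts -/

section CharProj

variable {A B k R : Type*} [Group A] [Group B] [Field k] [Ring R] [Algebra k R]

/-- The projection onto the `χ`-isotypic part of an action `τ` of a finite group `A`, as an element
of the algebra `R` through which `A` acts; for `χ = 1` this is the average over `A`. -/
noncomputable def charProj (τ : A →* R) (χ : A →* k) : R :=
  (Nat.card A : k)⁻¹ • ∑ᶠ a, χ a⁻¹ • τ a

variable {τ : A →* R} {χ : A →* k} {r : R} {a : A} {c : k}

lemma charProj_eq_sum [Fintype A] (τ : A →* R) (χ : A →* k) :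
    charProj τ χ = (Fintype.card A : k)⁻¹ • ∑ a, χ a⁻¹ • τ a := by
  rw [charProj, finsum_eq_sum_of_fintype, Nat.card_eq_fintype_card]

lemma char_ne_zero (χ : A →* k) (a : A) : χ a ≠ 0 :=
  ((Group.isUnit a).map χ).ne_zero

lemma semiconj_charProj {τ' : B →* R} {χ' : B →* k} [Finite A] (e : A ≃* B)
    (hτ : ∀ a, r * τ a = τ' (e a) * r) (hχ : ∀ a, χ' (e a) = χ a) :
    r * charProj τ χ = charProj τ' χ' * r := by
  have := Fintype.ofFinite A
  have := Fintype.ofEquiv A e.toEquiv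
  rw [charProj_eq_sum, charProj_eq_sum, mul_smul_comm, smul_mul_assoc, Finset.mul_sum,
    Finset.sum_mul, Fintype.card_congr e.toEquiv]
  congr 1
  refine Fintype.sum_equiv e.toEquiv _ _ fun a ↦ ?_
  simp [hτ, ← map_inv, hχ]

section Finite

variable [Finite A]

lemma apply_mul_charProj (τ : A →* R) (χ : A →* k) (a : A) :
    τ a * charProj τ χ = χ a • charProj τ χ := by
  have := Fintype.ofFinite A
  rw [charProj_eq_sum, mul_smul_comm, smul_comm (χ a), Finset.mul_sum, Finset.smul_sum (r := χ a)]
  congr 1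
  refine Fintype.sum_equiv (Equiv.mulLeft a) _ _ fun b ↦ ?_
  simp [smul_smul, mul_comm (χ a), char_ne_zero]

lemma charProj_mul_apply (τ : A →* R) (χ : A →* k) (a : A) :
    charProj τ χ * τ a = χ a • charProj τ χ := by
  have := Fintype.ofFinite A
  rw [charProj_eq_sum, smul_mul_assoc, smul_comm (χ a), Finset.sum_mul, Finset.smul_sum (r := χ a)]
  congr 1
  refine Fintype.sum_equiv (Equiv.mulRight a) _ _ fun b ↦ ?_
  simp [smul_smul, char_ne_zero]

lemma charProj_mul_eq_zero (h : τ a * r = c • r) (hc : c ≠ χ a) : charProj τ χ * r = 0 := by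
  have key : c • (charProj τ χ * r) = χ a • (charProj τ χ * r) := by
    rw [← mul_smul_comm, ← h, ← mul_assoc, charProj_mul_apply, smul_mul_assoc]
  have hsub : (c - χ a) • (charProj τ χ * r) = 0 := by rw [sub_smul, key, sub_self]
  exact (sub_ne_zero.2 hc).isUnit.smul_eq_zero.1 hsub

lemma mul_charProj_eq_zero (h : r * τ a = c • r) (hc : c ≠ χ a) : r * charProj τ χ = 0 := by
  have key : c • (r * charProj τ χ) = χ a • (r * charProj τ χ) := by
    rw [← smul_mul_assoc, ← h, mul_assoc, apply_mul_charProj, mul_smul_comm]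
  have hsub : (c - χ a) • (r * charProj τ χ) = 0 := by rw [sub_smul, key, sub_self]
  exact (sub_ne_zero.2 hc).isUnit.smul_eq_zero.1 hsub

variable [CharZero k]

lemma charProj_mul_eq_self (h : ∀ a, τ a * r = χ a • r) : charProj τ χ * r = r := by
  have := Fintype.ofFinite A
  have hχ (a : A) : χ a⁻¹ • χ a • r = r := by simp [smul_smul, char_ne_zero]
  simp only [charProj_eq_sum, smul_mul_assoc, Finset.sum_mul, h, hχ, Finset.sum_const,
    Finset.card_univ, ← Nat.cast_smul_eq_nsmul k]
  rw [inv_smul_smul₀ (Nat.cast_ne_zero.2 Fintype.card_ne_zero)]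

lemma isIdempotentElem_charProj (τ : A →* R) (χ : A →* k) : IsIdempotentElem (charProj τ χ) :=
  charProj_mul_eq_self (apply_mul_charProj τ χ)

lemma mul_charProj_one_mul_eq {s : R} (h : ∀ a, r * τ a * s = r * s) :
    r * charProj τ (1 : A →* k) * s = r * s := by
  have := Fintype.ofFinite A
  simp only [charProj_eq_sum, MonoidHom.one_apply, one_smul, mul_smul_comm, smul_mul_assoc,
    Finset.mul_sum, Finset.sum_mul, h, Finset.sum_const, Finset.card_univ,
    ← Nat.cast_smul_eq_nsmul k]
  rw [inv_smul_smul₀ (Nat.cast_ne_zero.2 Fintype.card_ne_zero)]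

end Finite

end CharProj

section Trace

variable {k V : Type*} [Field k] [AddCommGroup V] [Module k V]

lemma trace_eq_of_semiconjBy {u : (End k V)ˣ} {f g : End k V} (h : SemiconjBy ↑u f g) :
    LinearMap.trace k V f = LinearMap.trace k V g := by
  rw [← LinearMap.trace_conj k f u, h.eq, Units.mul_inv_cancel_right]

variable [FiniteDimensional k V] {f P a : End k V}

lemma trace_eq_finrank_range (hf : IsIdempotentElem f) :
    LinearMap.trace k V f = finrank k f.range :=
  (LinearMap.IsIdempotentElem.isProj_range f hf).trace

variable [CharZero k]

lemma exists_mul_eq_smul_of_trace_eq_one (hP : IsIdempotentElem P)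
    (htr : LinearMap.trace k V P = 1) (ha : Commute a P) : ∃ c : k, a * P = c • P := by
  rw [trace_eq_finrank_range hP, Nat.cast_eq_one, finrank_eq_one_iff'] at htr
  obtain ⟨⟨v, hv⟩, -, hspan⟩ := htr
  have hPv : P v = v := (LinearMap.IsIdempotentElem.isProj_range P hP).map_id v hv
  have hav : P (a v) = a v := by rw [← Module.End.mul_apply, ← ha.eq, Module.End.mul_apply, hPv]
  obtain ⟨c, hc⟩ := hspan ⟨a v, a v, hav⟩
  replace hc : c • v = a v := congrArg Subtype.val hc
  refine ⟨c, LinearMap.ext fun w ↦ ?_⟩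
  obtain ⟨b, hb⟩ := hspan ⟨P w, w, rfl⟩
  replace hb : b • v = P w := congrArg Subtype.val hb
  rw [Module.End.mul_apply, LinearMap.smul_apply, ← hb, map_smul, ← hc, smul_comm]

lemma map_commutator_mul_eq_self {G : Type*} [Group G] {σ : G →* End k V}
    (hP : IsIdempotentElem P) (htr : LinearMap.trace k V P = 1) {g h : G}
    (hg : Commute (σ g) P) (hh : Commute (σ h) P) : σ ⁅g, h⁆ * P = P := by
  obtain ⟨c, hc⟩ := exists_mul_eq_smul_of_trace_eq_one hP htr hg
  obtain ⟨d, hd⟩ := exists_mul_eq_smul_of_trace_eq_one hP htr hh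
  have swap : σ (g * h) * P = σ (h * g) * P := by
    simp only [map_mul, mul_assoc, hc, hd, mul_smul_comm, smul_smul, mul_comm]
  have hcomm : Commute (σ (h * g)) P := by
    rw [map_mul]
    exact hh.mul_left hg
  have hfactor : σ ⁅g, h⁆ * σ (h * g) = σ (g * h) := by
    rw [← map_mul, commutatorElement_def]
    group
  refine ((Group.isUnit (h * g)).map σ).mul_right_cancel ?_
  rw [mul_assoc, ← hcomm.eq, ← mul_assoc, hfactor, swap]

end Trace

/-! ### Families of idempotents commuting with their sum -/

section IdempotentFamily

variable {k V : Type*} [Field k] [AddCommGroup V] [Module k V] {T a b : End k V} {μ : k}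

/-- The operator induced by `a` on the generalized `μ`-eigenspace of an operator `T` with which it
commutes, the generalized eigenspaces being the blocks in which the family is studied. -/
def restrictGenEigenspace (ha : Commute T a) (μ : k) : End k (T.maxGenEigenspace μ) :=
  a.restrict (T.mapsTo_maxGenEigenspace_of_comm ha μ)

lemma restrictGenEigenspace_mul (ha : Commute T a) (hb : Commute T b) (μ : k) :
    restrictGenEigenspace (ha.mul_right hb) μ =
      restrictGenEigenspace ha μ * restrictGenEigenspace hb μ :=
  rfl

lemma trace_restrictGenEigenspace_eq {u : (End k V)ˣ} {f g : End k V} (hf : Commute T f)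
    (hg : Commute T g) (hu : Commute T u) (h : SemiconjBy ↑u f g) (μ : k) :
    LinearMap.trace k _ (restrictGenEigenspace hf μ) =
      LinearMap.trace k _ (restrictGenEigenspace hg μ) := by
  have hu' : Commute T ↑u⁻¹ := hu.units_inv_right
  let w : (End k (T.maxGenEigenspace μ))ˣ :=
    { val := restrictGenEigenspace hu μ
      inv := restrictGenEigenspace hu' μ
      val_inv := LinearMap.ext fun v ↦ Subtype.ext <| LinearMap.congr_fun u.mul_inv v.1
      inv_val := LinearMap.ext fun v ↦ Subtype.ext <| LinearMap.congr_fun u.inv_mul v.1 }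
  exact trace_eq_of_semiconjBy (u := w) <|
    LinearMap.ext fun v ↦ Subtype.ext <| LinearMap.congr_fun h.eq v.1

variable [FiniteDimensional k V]

lemma trace_restrictGenEigenspace_mul_self (ha : Commute T a) (μ : k) :
    LinearMap.trace k _ (restrictGenEigenspace (ha.mul_right (.refl T)) μ) =
      μ * LinearMap.trace k _ (restrictGenEigenspace ha μ) :=
  LinearMap.trace_comp_eq_mul_of_commute_of_isNilpotent μ
    (LinearMap.restrict_commute ha.symm (T.mapsTo_maxGenEigenspace_of_comm ha μ)
      (T.mapsTo_maxGenEigenspace_of_comm rfl μ))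
    (T.isNilpotent_restrict_maxGenEigenspace_sub_algebraMap μ)

lemma finite_maxGenEigenspace_ne_bot (T : End k V) : {μ | T.maxGenEigenspace μ ≠ ⊥}.Finite :=
  WellFoundedGT.finite_ne_bot_of_iSupIndep T.independent_maxGenEigenspace

open scoped Classical in
lemma trace_eq_sum_restrictGenEigenspace [IsAlgClosed k] (ha : Commute T a) :
    LinearMap.trace k V a = ∑ μ ∈ (finite_maxGenEigenspace_ne_bot T).toFinset,
      LinearMap.trace k _ (restrictGenEigenspace ha μ) :=
  LinearMap.trace_eq_sum_trace_restrict'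
    (DirectSum.isInternal_submodule_of_iSupIndep_of_iSup_eq_top
      T.independent_maxGenEigenspace (Module.End.iSup_maxGenEigenspace_eq_top T)) _ _

variable {ι : Type*} {s : Finset ι} {f : ι → End k V} {i₀ : ι}

lemma mul_finrank_maxGenEigenspace_eq (hcomm : ∀ i ∈ s, Commute (∑ i ∈ s, f i) (f i))
    (hconj : ∀ i ∈ s, ∃ u : (End k V)ˣ, Commute (∑ i ∈ s, f i) u ∧ SemiconjBy ↑u (f i) (f i₀))
    (h₀ : i₀ ∈ s) (μ : k) :
    μ * finrank k ((∑ i ∈ s, f i).maxGenEigenspace μ) =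
      s.card * LinearMap.trace k _ (restrictGenEigenspace (hcomm i₀ h₀) μ) := by
  set T := ∑ i ∈ s, f i
  have hsum : restrictGenEigenspace (.refl T) μ =
      ∑ i ∈ s.attach, restrictGenEigenspace (hcomm i.1 i.2) μ := by
    ext v
    rw [LinearMap.sum_apply, AddSubmonoidClass.coe_finsetSum]
    exact (LinearMap.sum_apply ..).trans (Finset.sum_attach s fun i ↦ f i v).symm
  have htrace := trace_restrictGenEigenspace_mul_self (Commute.one_right T) μ
  rw [show restrictGenEigenspace (Commute.one_right T) μ = 1 from rfl, LinearMap.trace_one]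
    at htrace
  rw [← htrace, show restrictGenEigenspace _ μ = restrictGenEigenspace (.refl T) μ from
    LinearMap.ext fun _ ↦ rfl, hsum, map_sum, ← s.card_attach, ← nsmul_eq_mul]
  refine Finset.sum_eq_card_nsmul fun i _ ↦ ?_
  obtain ⟨u, huT, hu⟩ := hconj i i.2
  exact trace_restrictGenEigenspace_eq _ _ huT hu μ

lemma sub_sq_div_eq_zero_or_half_le {r n : ℕ} (h : r ≤ n) :
    (r - r ^ 2 / n : ℚ) = 0 ∨ (1 / 2 : ℚ) ≤ r - r ^ 2 / n := by
  rcases r.eq_zero_or_pos with rfl | hr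
  · simp
  rcases h.eq_or_lt with rfl | hlt
  · left
    field_simp
    ring
  · right
    have hn : (0 : ℚ) < n := by exact_mod_cast hr.trans hlt
    have h1 : (1 : ℚ) ≤ r := by exact_mod_cast hr
    have h2 : (r : ℚ) + 1 ≤ n := by exact_mod_cast hlt
    rw [le_sub_iff_add_le, ← le_sub_iff_add_le', div_le_iff₀ hn]
    nlinarith [mul_nonneg (sub_nonneg.2 h1) (sub_nonneg.2 h2)]

lemma sum_eq_zero_or_le_sum {c : ℚ} (hc : 0 ≤ c) {κ : Type*} (S : Finset κ) {t : κ → ℚ}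
    (h : ∀ i ∈ S, t i = 0 ∨ c ≤ t i) : ∑ i ∈ S, t i = 0 ∨ c ≤ ∑ i ∈ S, t i := by
  by_cases h0 : ∀ i ∈ S, t i = 0
  · exact .inl (Finset.sum_eq_zero h0)
  push Not at h0
  obtain ⟨i, hi, hti⟩ := h0
  refine .inr (((h i hi).resolve_left hti).trans (Finset.single_le_sum (fun j hj ↦ ?_) hi))
  exact (h j hj).elim (fun h ↦ h.ge) hc.trans

/-- The defect vanishes exactly on the blocks where `f i₀` is `0` or the identity; a block of
dimension `n` on which `f i₀` has rank `r` contributes `r * (n - r) / n`. -/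
theorem exists_trace_defect [IsAlgClosed k] [CharZero k] (hidem : IsIdempotentElem (f i₀))
    (h₀ : i₀ ∈ s) (hcomm : ∀ i ∈ s, Commute (∑ i ∈ s, f i) (f i))
    (hconj : ∀ i ∈ s, ∃ u : (End k V)ˣ,
      Commute (∑ i ∈ s, f i) u ∧ SemiconjBy ↑u (f i) (f i₀)) :
    ∃ Δ : ℚ, (Δ = 0 ∨ 1 / 2 ≤ Δ) ∧
      s.card * LinearMap.trace k V (f i₀) - LinearMap.trace k V (f i₀ * ∑ i ∈ s, f i) =
        s.card * (Δ : k) := by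
  classical
  set T := ∑ i ∈ s, f i
  set S := (finite_maxGenEigenspace_ne_bot T).toFinset
  set g := fun μ ↦ restrictGenEigenspace (hcomm i₀ h₀) μ
  have hg (μ : k) : LinearMap.trace k _ (g μ) = finrank k (g μ).range :=
    trace_eq_finrank_range (by
      rw [IsIdempotentElem, ← restrictGenEigenspace_mul]
      exact LinearMap.ext fun v ↦ Subtype.ext <| LinearMap.congr_fun hidem v.1)
  refine ⟨∑ μ ∈ S, (finrank k (g μ).range - finrank k (g μ).range ^ 2 /
    finrank k (T.maxGenEigenspace μ) : ℚ), sum_eq_zero_or_le_sum (by norm_num) S fun μ _ ↦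
      sub_sq_div_eq_zero_or_half_le (Submodule.finrank_le _), ?_⟩
  have htraceT : LinearMap.trace k V (f i₀ * T) = ∑ μ ∈ S, μ * LinearMap.trace k _ (g μ) :=
    (trace_eq_sum_restrictGenEigenspace ((hcomm i₀ h₀).mul_right (.refl T))).trans <|
      Finset.sum_congr rfl fun μ _ ↦ trace_restrictGenEigenspace_mul_self (hcomm i₀ h₀) μ
  rw [htraceT, trace_eq_sum_restrictGenEigenspace (hcomm i₀ h₀)]
  push_cast
  rw [Finset.mul_sum, Finset.mul_sum, ← Finset.sum_sub_distrib]
  refine Finset.sum_congr rfl fun μ hμ ↦ ?_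
  have hdim : (finrank k (T.maxGenEigenspace μ) : k) ≠ 0 := by
    have hne : T.maxGenEigenspace μ ≠ ⊥ := by simpa [S] using hμ
    exact Nat.cast_ne_zero.2 (Nat.one_le_iff_ne_zero.1 (Submodule.one_le_finrank_iff.2 hne))
  have hμ := mul_finrank_maxGenEigenspace_eq hcomm hconj h₀ μ
  rw [hg] at hμ ⊢
  field_simp
  linear_combination -(finrank k (g μ).range : k) * hμ

end IdempotentFamily

/-! ### Transvections and the special linear group -/

section SpecialLinear

variable {F E : Type*} [Field F] [AddCommGroup E] [Module F E]

instance faithfulSMul_specialLinearGroup : FaithfulSMul (SL F E) E :=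
  ⟨_root_.SpecialLinearGroup.ext _ _⟩

instance [Finite E] : Finite (SL F E) :=
  .of_injective _ (MulAction.toPerm_injective (β := E))

instance [Finite F] [Finite E] : Finite (Dual F E) :=
  .of_injective (fun φ : Dual F E ↦ (φ : E → F)) DFunLike.coe_injective

lemma exists_dual_eq_one {p : Submodule F E} {z : E} (hz : z ∉ p) :
    ∃ θ ∈ p.dualAnnihilator, θ z = 1 := by
  obtain ⟨θ, hθz, hθ⟩ := Submodule.exists_le_ker_of_notMem hz
  refine ⟨(θ z)⁻¹ • θ, (Submodule.mem_dualAnnihilator _).2 fun w hw ↦ ?_, by simp [hθz]⟩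
  simp [LinearMap.mem_ker.1 (hθ hw)]

lemma mem_dualAnnihilator_span {s : Set E} {φ : Dual F E} :
    φ ∈ (Submodule.span F s).dualAnnihilator ↔ ∀ v ∈ s, φ v = 0 := by
  rw [← SetLike.mem_coe, Submodule.coe_dualAnnihilator_span]
  rfl

lemma mem_dualAnnihilator_span_singleton {φ : Dual F E} {x : E} :
    φ ∈ (F ∙ x).dualAnnihilator ↔ φ x = 0 := by
  rw [mem_dualAnnihilator_span]
  simp

variable {x y z v : E} {φ θ : Dual F E} {g : SL F E}

/-- The transvection `v ↦ v + φ v • x` as an element of the special linear group. -/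
def transvec (h : φ x = 0) : SL F E :=
  ⟨LinearEquiv.transvection h, LinearEquiv.transvection.det_eq_one h⟩

lemma transvec_smul (h : φ x = 0) (v : E) : transvec h • v = v + φ v • x :=
  rfl

lemma transvec_smul_of_apply_eq_zero (h : φ x = 0) (hv : φ v = 0) : transvec h • v = v := by
  rw [transvec_smul, hv, zero_smul, add_zero]

lemma mul_transvec (g : SL F E) (hφ : φ x = 0) (hθ : θ (g • x) = 0)
    (h : ∀ v, θ (g • v) = φ v) : g * transvec hφ = transvec hθ * g := by
  refine FaithfulSMul.eq_of_smul_eq_smul (α := E) fun v ↦ ?_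
  simp only [mul_smul, transvec_smul, smul_add, h, smul_comm g]

lemma commutator_transvec (hθy : θ y = 0) (hφz : φ z = 0) (hφy : φ y = 0) (hθz : θ z = 1) :
    ⁅transvec hθy, transvec hφz⁆ = transvec hφy := by
  rw [commutatorElement_def, mul_inv_eq_iff_eq_mul, mul_inv_eq_iff_eq_mul]
  refine FaithfulSMul.eq_of_smul_eq_smul (α := E) fun v ↦ ?_
  simp only [mul_smul, transvec_smul, map_add, map_smul, hφz, hφy, hθz, smul_eq_mul]
  module

variable (F) in
/-- The elementary abelian group of all transvections in the direction `x`, parametrized by the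
functionals that vanish at `x`. -/
def transvecHom (x : E) : Multiplicative (F ∙ x).dualAnnihilator →* SL F E where
  toFun φ := transvec (mem_dualAnnihilator_span_singleton.1 φ.toAdd.2)
  map_one' := FaithfulSMul.eq_of_smul_eq_smul (α := E) fun v ↦ by simp [transvec_smul]
  map_mul' φ θ := FaithfulSMul.eq_of_smul_eq_smul (α := E) fun v ↦ by
    have hφ := mem_dualAnnihilator_span_singleton.1 φ.toAdd.2
    simp only [mul_smul, transvec_smul, map_add, map_smul, toAdd_mul, Submodule.coe_add,
      LinearMap.add_apply, hφ]
    module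

lemma exists_det_eq_and_forall_mem_eq [FiniteDimensional F E] {p : Submodule F E} (hp : p ≠ ⊤)
    (c : Fˣ) : ∃ h : E ≃ₗ[F] E, h.det = c ∧ ∀ v ∈ p, h v = v := by
  obtain ⟨z, hz⟩ : ∃ z, z ∉ p := by simpa [Submodule.eq_top_iff'] using hp
  obtain ⟨θ, hθ, hθz⟩ := exists_dual_eq_one hz
  have hunit : IsUnit (1 + θ ((c - 1 : F) • z)) := by simp [hθz]
  refine ⟨LinearEquiv.dilatransvection hunit, ?_, fun v hv ↦ ?_⟩
  · ext
    simp [LinearEquiv.coe_det, LinearMap.transvection.det, hθz]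
  · rw [LinearEquiv.dilatransvection.apply, (Submodule.mem_dualAnnihilator _).1 hθ v hv, zero_smul,
      add_zero]

lemma exists_smul_eq_of_linearIndependent [FiniteDimensional F E] {m : ℕ} (hm : m < finrank F E)
    {v w : Fin m → E} (hv : LinearIndependent F v) (hw : LinearIndependent F w) :
    ∃ g : SL F E, ∀ i, g • v i = w i := by
  obtain ⟨g, hg⟩ := Submodule.exists_linearEquiv_restrict_eq
    ((Basis.span hv).equiv (Basis.span hw) (.refl _))
  have htop : Submodule.span F (Set.range v) ≠ ⊤ := fun h ↦ by
    have hcard := finrank_span_eq_card hv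
    rw [h, finrank_top, Fintype.card_fin] at hcard
    exact hm.ne' hcard
  obtain ⟨h, hdet, hfix⟩ := exists_det_eq_and_forall_mem_eq htop (g.det)⁻¹
  refine ⟨⟨g * h, by rw [map_mul, hdet, mul_inv_cancel]⟩, fun i ↦ ?_⟩
  have hi : v i ∈ Submodule.span F (Set.range v) := Submodule.subset_span ⟨i, rfl⟩
  change g (h (v i)) = w i
  rw [hfix _ hi]
  have := hg (Basis.span hv i)
  rw [Basis.equiv_apply, Equiv.refl_apply, Basis.span_apply, Basis.span_apply] at this
  exact this.symm

/-- The unipotent radical of the parabolic subgroup stabilizing `D`: the elements acting trivially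
on `D` and on `E ⧸ D`. -/
def unipotentRadical (D : Submodule F E) : Subgroup (SL F E) where
  carrier := {g | (∀ v ∈ D, g • v = v) ∧ ∀ v, g • v - v ∈ D}
  one_mem' := by simp
  mul_mem' := by
    rintro g h ⟨hg, hg'⟩ ⟨hh, hh'⟩
    refine ⟨fun v hv ↦ by rw [mul_smul, hh v hv, hg v hv], fun v ↦ ?_⟩
    rw [mul_smul, ← sub_add_sub_cancel _ (h • v)]
    exact D.add_mem (hg' _) (hh' v)
  inv_mem' := by
    rintro g ⟨hg, hg'⟩
    have hinv (v : E) (hv : v ∈ D) : g⁻¹ • v = v := inv_smul_eq_iff.2 (hg v hv).symm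
    refine ⟨hinv, fun v ↦ ?_⟩
    have := hg' (g⁻¹ • v)
    rw [smul_inv_smul] at this
    exact neg_sub v (g⁻¹ • v) ▸ D.neg_mem this

lemma linearIndependent_pair_iff_notMem_span (hx : x ≠ 0) :
    LinearIndependent F ![x, y] ↔ y ∉ F ∙ x := by
  rw [LinearIndependent.pair_iff' hx, Submodule.mem_span_singleton, not_exists]

lemma exists_transvec_mul_transvec_eq (hxy : LinearIndependent F ![x, y])
    (hg : g ∈ unipotentRadical (Submodule.span F {x, y})) :
    ∃ φ ∈ (Submodule.span F {x, y}).dualAnnihilator,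
      ∃ θ ∈ (Submodule.span F {x, y}).dualAnnihilator, ∃ (hφ : φ x = 0) (hθ : θ y = 0),
        g = transvec hφ * transvec hθ := by
  set D := Submodule.span F {x, y}
  have hy : y ∉ F ∙ x := (linearIndependent_pair_iff_notMem_span (hxy.ne_zero 0)).1 hxy
  have hx : x ∉ F ∙ y := (linearIndependent_pair_iff_notMem_span (hxy.ne_zero 1)).1
    (LinearIndependent.pair_symm_iff.1 hxy)
  obtain ⟨α, hαy, hαx⟩ := exists_dual_eq_one hx
  obtain ⟨β, hβx, hβy⟩ := exists_dual_eq_one hy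
  rw [mem_dualAnnihilator_span_singleton] at hαy hβx
  set L := DistribSMul.toLinearMap F E g - 1
  have hL (v : E) : L v = g • v - v := rfl
  have hann (γ : Dual F E) : γ ∘ₗ L ∈ D.dualAnnihilator :=
    (Submodule.mem_dualAnnihilator _).2 fun v hv ↦ by
      rw [LinearMap.comp_apply, hL, hg.1 v hv, sub_self, map_zero]
  have hxD : x ∈ D := Submodule.mem_span_pair.2 ⟨1, 0, by simp⟩
  have hyD : y ∈ D := Submodule.mem_span_pair.2 ⟨0, 1, by simp⟩
  have hαLy : (α ∘ₗ L) y = 0 := (Submodule.mem_dualAnnihilator _).1 (hann α) y hyD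
  refine ⟨α ∘ₗ L, hann α, β ∘ₗ L, hann β, (Submodule.mem_dualAnnihilator _).1 (hann α) x hxD,
    (Submodule.mem_dualAnnihilator _).1 (hann β) y hyD,
    FaithfulSMul.eq_of_smul_eq_smul (α := E) fun v ↦ ?_⟩
  obtain ⟨a, b, hab⟩ := Submodule.mem_span_pair.1 (hg.2 v)
  have hLv : L v = a • x + b • y := hab.symm
  simp only [mul_smul, transvec_smul, map_add, map_smul, hαLy, smul_zero, add_zero]
  simp only [LinearMap.comp_apply, hLv, map_add, map_smul, hαx, hαy, hβx, hβy]
  rw [← sub_add_cancel (g • v) v, ← hab]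
  simp only [smul_eq_mul]
  module

end SpecialLinear

section Generation

variable {F : Type*} [Field F]

lemma transvection_mulVec {ι : Type*} [Fintype ι] [DecidableEq ι] {i j : ι} (hij : i ≠ j) (a : F)
    (v : ι → F) :
    (Matrix.SpecialLinearGroup.transvection hij a : Matrix ι ι F) *ᵥ v =
      v + Pi.single i (a * v j) := by
  rw [Matrix.SpecialLinearGroup.transvection_coe, add_mulVec, one_mulVec, single_mulVec]
  rfl

lemma diag2n_eq_mul_transvection {ι : Type*} [Fintype ι] [DecidableEq ι] {i j : ι} (hij : i ≠ j)
    (a : F) (ha : a ≠ 0) :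
    Matrix.SpecialLinearGroup.diag2n hij a ha =
      .transvection hij a * .transvection hij.symm (-a⁻¹) * .transvection hij a *
        .transvection hij (-1) * .transvection hij.symm 1 * .transvection hij (-1) := by
  refine Subtype.ext (Matrix.ext_of_mulVec_single fun l ↦ funext fun m ↦ ?_)
  simp only [Matrix.SpecialLinearGroup.coe_mul, ← mulVec_mulVec, transvection_mulVec,
    Matrix.SpecialLinearGroup.diag2n_coe, mulVec_diagonal, Pi.add_apply, Pi.single_apply]
  grind

variable {E : Type*} [AddCommGroup E] [Module F E]

lemma toLin_equiv_transvection {ι : Type*} [Fintype ι] [DecidableEq ι] (b : Basis ι F E) {i j : ι}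
    (hij : i ≠ j) (a : F) :
    Matrix.SpecialLinearGroup.toLin_equiv b (Matrix.SpecialLinearGroup.transvection hij a) =
      transvec (φ := a • b.coord j) (x := b i) (by simp [hij]) := by
  refine FaithfulSMul.eq_of_smul_eq_smul (α := E) fun v ↦ ?_
  change Matrix.toLin b b (Matrix.SpecialLinearGroup.transvection hij a : Matrix ι ι F) v = _
  rw [transvec_smul, Matrix.toLin_apply, transvection_mulVec]
  simp [add_smul, Finset.sum_add_distrib, b.sum_repr, Pi.single_apply]

lemma eq_one_of_forall_transvec [FiniteDimensional F E] (hE : 2 ≤ finrank F E) {H : Type*}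
    [Monoid H] {σ : SL F E →* H}
    (h : ∀ (x : E) (φ : Dual F E) (hφ : φ x = 0), σ (transvec hφ) = 1) : σ = 1 := by
  have : Nontrivial (Fin (finrank F E)) := Fin.nontrivial_iff_two_le.2 hE
  let b := finBasis F E
  suffices hA : ∀ A, σ (Matrix.SpecialLinearGroup.toLin_equiv b A) = 1 from
    MonoidHom.ext fun g ↦ by
      simpa using hA ((Matrix.SpecialLinearGroup.toLin_equiv b).symm g)
  have htransv {i j} (hij : i ≠ j) (a : F) :
      σ (Matrix.SpecialLinearGroup.toLin_equiv b (.transvection hij a)) = 1 := by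
    rw [toLin_equiv_transvection, h]
  refine fun A ↦ Matrix.SpecialLinearGroup.diagonal_transvection_induction'
    (fun A ↦ σ (Matrix.SpecialLinearGroup.toLin_equiv b A) = 1) A
    (fun i j hij c hc ↦ ?_) (fun i j hij a ↦ htransv hij a) fun A B hA hB ↦ ?_
  · simp only [diag2n_eq_mul_transvection, map_mul, htransv, mul_one]
  · rw [map_mul, map_mul, hA, hB, one_mul]

end Generation

/-! ### Weights of the transvection groups -/

section Weight

variable {F E k V : Type*} [Field F] [AddCommGroup E] [Module F E] [Field k] [AddCommGroup V]
  [Module k V]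

/-- The character `φ ↦ ψ (φ w)` of the group of functionals that vanish at `x`. -/
def evalChar (ψ : AddChar F k) (x w : E) : Multiplicative (F ∙ x).dualAnnihilator →* k :=
  (ψ.compAddMonoidHom ((Dual.eval F E w).toAddMonoidHom.comp
    (Submodule.subtype _).toAddMonoidHom)).toMonoidHom

/-- The projection of the representation `σ` onto the weight `w` of the group of transvections in
the direction `x`: on its range, the transvection by `φ` acts as the scalar `ψ (φ w)`. -/
noncomputable def weightProj (σ : SL F E →* End k V) (ψ : AddChar F k) (x w : E) : End k V :=
  charProj (A := Multiplicative (F ∙ x).dualAnnihilator) (σ.comp (transvecHom F x)) (evalChar ψ x w)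

variable {σ : SL F E →* End k V} {ψ : AddChar F k} {x y w u : E} {φ : Dual F E}

lemma weightProj_congr (h : w - u ∈ F ∙ x) : weightProj σ ψ x w = weightProj σ ψ x u := by
  have hchar : evalChar ψ x w = evalChar ψ x u := MonoidHom.ext fun φ ↦ congrArg ψ <| by
    have := (Submodule.mem_dualAnnihilator _).1 φ.toAdd.2 _ h
    rwa [map_sub, sub_eq_zero] at this
  rw [weightProj, hchar, weightProj]

lemma exists_mem_dualAnnihilator_apply_ne_one (hψ : ψ ≠ 1) {D : Submodule F E} (h : w ∉ D) :
    ∃ φ ∈ D.dualAnnihilator, ψ (φ w) ≠ 1 := by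
  obtain ⟨c, hc⟩ := AddChar.ne_one_iff.1 hψ
  obtain ⟨θ, hθ, hθw⟩ := exists_dual_eq_one h
  exact ⟨c • θ, Submodule.smul_mem _ c hθ, by simpa [hθw] using hc⟩

lemma natCard_span_singleton (hx : x ≠ 0) : Nat.card (F ∙ x) = Nat.card F :=
  Nat.card_congr (LinearEquiv.toSpanNonzeroSingleton F E x hx).toEquiv.symm

lemma natCard_dualAnnihilator_mul_natCard [FiniteDimensional F E] (p : Submodule F E) :
    Nat.card p.dualAnnihilator * Nat.card p = Nat.card E := by
  rw [Module.natCard_eq_pow_finrank (K := F) (V := p.dualAnnihilator),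
    Module.natCard_eq_pow_finrank (K := F) (V := p),
    Module.natCard_eq_pow_finrank (K := F) (V := E), ← pow_add, add_comm,
    Subspace.finrank_add_finrank_dualAnnihilator_eq]

open scoped Classical in
lemma sum_mem_apply_eq_ite [Fintype E] (hψ : ψ ≠ 1) (φ : Dual F E) (W : Submodule F E) :
    ∑ w with w ∈ W, ψ (φ w) = if φ ∈ W.dualAnnihilator then (Nat.card W : k) else 0 := by
  let χ := ψ.compAddMonoidHom (φ.toAddMonoidHom.comp W.subtype.toAddMonoidHom)
  have hχ : χ = 0 ↔ φ ∈ W.dualAnnihilator := by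
    rw [Submodule.mem_dualAnnihilator]
    refine ⟨fun h ↦ ?_, fun h ↦ DFunLike.ext _ _ fun w ↦ by simp [χ, h w w.2]⟩
    by_contra! hφ
    obtain ⟨v, hv, hne⟩ := hφ
    obtain ⟨c, hc⟩ := AddChar.ne_one_iff.1 hψ
    refine hc ?_
    have := DFunLike.congr_fun h ⟨(c / φ v) • v, W.smul_mem _ hv⟩
    simpa [χ, hne] using this
  calc ∑ w with w ∈ W, ψ (φ w) = ∑ w : W, χ w := Finset.sum_subtype _ (by simp) _
    _ = if φ ∈ W.dualAnnihilator then (Nat.card W : k) else 0 := by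
      rw [AddChar.sum_eq_ite]
      simp only [hχ, Nat.card_eq_fintype_card]

variable [Finite F] [Finite E]

lemma map_transvec_mul_weightProj (hφ : φ x = 0) :
    σ (transvec hφ) * weightProj σ ψ x w = ψ (φ w) • weightProj σ ψ x w :=
  (apply_mul_charProj (A := Multiplicative (F ∙ x).dualAnnihilator) (σ.comp (transvecHom F x))
    (evalChar ψ x w) (.ofAdd ⟨φ, mem_dualAnnihilator_span_singleton.2 hφ⟩) :)

lemma weightProj_mul_map_transvec (hφ : φ x = 0) :
    weightProj σ ψ x w * σ (transvec hφ) = ψ (φ w) • weightProj σ ψ x w :=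
  (charProj_mul_apply (A := Multiplicative (F ∙ x).dualAnnihilator) (σ.comp (transvecHom F x))
    (evalChar ψ x w) (.ofAdd ⟨φ, mem_dualAnnihilator_span_singleton.2 hφ⟩) :)

lemma weightProj_mul_eq_zero (hφ : φ x = 0) {r : End k V} {c : k}
    (h : σ (transvec hφ) * r = c • r) (hc : c ≠ ψ (φ w)) : weightProj σ ψ x w * r = 0 :=
  charProj_mul_eq_zero (a := Multiplicative.ofAdd ⟨φ, mem_dualAnnihilator_span_singleton.2 hφ⟩) h hc

lemma mul_weightProj_eq_zero (hφ : φ x = 0) {r : End k V} {c : k}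
    (h : r * σ (transvec hφ) = c • r) (hc : c ≠ ψ (φ w)) : r * weightProj σ ψ x w = 0 :=
  mul_charProj_eq_zero (a := Multiplicative.ofAdd ⟨φ, mem_dualAnnihilator_span_singleton.2 hφ⟩) h hc

lemma map_mul_weightProj (g : SL F E) :
    σ g * weightProj σ ψ x w = weightProj σ ψ (g • x) (g • w) * σ g := by
  have hmap : (F ∙ x).dualAnnihilator.map (g.toLinearEquiv.symm.dualMap : Dual F E →ₗ[F] Dual F E) =
      (F ∙ (g • x)).dualAnnihilator := by
    ext φ
    rw [Submodule.mem_map_equiv, mem_dualAnnihilator_span_singleton,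
      mem_dualAnnihilator_span_singleton]
    rfl
  let e := g.toLinearEquiv.symm.dualMap.ofSubmodules _ _ hmap
  have he (φ) (v : E) : (e φ : Dual F E) (g • v) = (φ : Dual F E) v :=
    congrArg (φ : Dual F E) (g.toLinearEquiv.symm_apply_apply v)
  refine semiconj_charProj (AddEquiv.toMultiplicative e.toAddEquiv) (fun φ ↦ ?_)
    fun φ ↦ congrArg ψ (he φ.toAdd w)
  rw [MonoidHom.comp_apply, MonoidHom.comp_apply, ← map_mul, ← map_mul]
  exact congrArg σ (mul_transvec g _ _ fun v ↦ he φ.toAdd v)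

lemma weightProj_mul_weightProj_eq_zero (hψ : ψ ≠ 1) (h : w - u ∉ F ∙ x) :
    weightProj σ ψ x w * weightProj σ ψ x u = 0 := by
  obtain ⟨φ, hφ, hne⟩ := exists_mem_dualAnnihilator_apply_ne_one hψ h
  refine weightProj_mul_eq_zero _ (map_transvec_mul_weightProj
    (mem_dualAnnihilator_span_singleton.1 hφ)) fun heq ↦ hne ?_
  rw [map_sub, AddChar.map_sub_eq_div, ← heq, div_self]
  exact (ψ.val_isUnit _).ne_zero

section CharZero

variable [CharZero k]

lemma isIdempotentElem_weightProj (σ : SL F E →* End k V) (ψ : AddChar F k) (x w : E) :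
    IsIdempotentElem (weightProj σ ψ x w) :=
  isIdempotentElem_charProj (A := Multiplicative (F ∙ x).dualAnnihilator) _ _

open scoped Classical in
lemma natCard_smul_sum_weightProj [Fintype E] [Fintype (F ∙ x).dualAnnihilator] (hψ : ψ ≠ 1)
    (W : Submodule F E) :
    (Nat.card (F ∙ x).dualAnnihilator : k) • ∑ w with w ∈ W, weightProj σ ψ x w =
      (Nat.card W : k) • ∑ φ : (F ∙ x).dualAnnihilator with φ.1 ∈ W.dualAnnihilator,
        σ (transvecHom F x (.ofAdd φ)) := by
  have hcard : (Nat.card (F ∙ x).dualAnnihilator : k) ≠ 0 := Nat.cast_ne_zero.2 Nat.card_pos.ne'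
  have hP (w : E) : (Nat.card (F ∙ x).dualAnnihilator : k) • weightProj σ ψ x w =
      ∑ φ : (F ∙ x).dualAnnihilator, ψ (-φ.1 w) • σ (transvecHom F x (.ofAdd φ)) := by
    rw [weightProj, charProj, Nat.card_congr Multiplicative.toAdd, smul_inv_smul₀ hcard,
      finsum_eq_sum_of_fintype]
    exact Fintype.sum_equiv Multiplicative.toAdd _ _ fun φ ↦ rfl
  rw [Finset.smul_sum, Finset.sum_congr rfl fun w _ ↦ hP w, Finset.sum_comm, Finset.smul_sum,
    Finset.sum_filter]
  refine Finset.sum_congr rfl fun φ _ ↦ ?_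
  rw [← Finset.sum_smul]
  have := sum_mem_apply_eq_ite hψ (-φ.1) W
  simp only [LinearMap.neg_apply, neg_mem_iff] at this
  rw [this, ite_smul, zero_smul]

lemma sum_weightProj [Fintype E] (hψ : ψ ≠ 1) (hx : x ≠ 0) :
    ∑ w, weightProj σ ψ x w = (Nat.card F : k) • 1 := by
  classical
  have := Fintype.ofFinite (F ∙ x).dualAnnihilator
  have hcard : (Nat.card (F ∙ x).dualAnnihilator : k) ≠ 0 := Nat.cast_ne_zero.2 Nat.card_pos.ne'
  have hE := natCard_dualAnnihilator_mul_natCard (F ∙ x)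
  rw [natCard_span_singleton hx] at hE
  have hfilter : ({φ | φ.1 ∈ (⊤ : Submodule F E).dualAnnihilator} :
      Finset (F ∙ x).dualAnnihilator) = {0} := by
    ext φ
    simp
  have hsum := natCard_smul_sum_weightProj (σ := σ) (x := x) hψ ⊤
  rw [hfilter, Finset.sum_singleton, ofAdd_zero, map_one, map_one,
    Nat.card_congr Submodule.topEquiv.toEquiv, ← hE, Nat.cast_mul, mul_smul] at hsum
  simp only [Submodule.mem_top, Finset.filter_true] at hsum
  exact smul_right_injective _ hcard hsum

end CharZero

end Weight

section WeightTrace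

lemma sum_eq_card_mul_add {ι k : Type*} [Ring k] {s t : Finset ι} (hst : s ⊆ t) {f : ι → k}
    {a b : k} (ha : ∀ i ∈ s, f i = a) (hb : ∀ i ∈ t, i ∉ s → f i = b) :
    ∑ i ∈ t, f i = s.card * a + (t.card - s.card) * b := by
  classical
  rw [← Finset.sum_sdiff hst, add_comm, Finset.sum_congr rfl ha, Finset.sum_const, nsmul_eq_mul,
    Finset.sum_congr rfl fun i hi ↦ hb i (Finset.mem_sdiff.1 hi).1 (Finset.mem_sdiff.1 hi).2,
    Finset.sum_const, nsmul_eq_mul, Finset.cast_card_sdiff hst]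

open scoped Classical in
lemma card_filter_ne_zero {E : Type*} [Zero E] [Fintype E] (R : Type*) [Ring R] :
    (({v | v ≠ 0} : Finset E).card : R) = Nat.card E - 1 := by
  rw [Finset.filter_ne', Finset.cast_card_erase_of_mem (Finset.mem_univ _), Finset.card_univ,
    Nat.card_eq_fintype_card]

lemma trace_eq_of_map_mul_eq {G k V : Type*} [Group G] [Field k] [AddCommGroup V] [Module k V]
    {σ : G →* End k V} {g : G} {r s : End k V} (h : σ g * r = s * σ g) :
    LinearMap.trace k V r = LinearMap.trace k V s :=
  trace_eq_of_semiconjBy (u := Units.map σ (toUnits g)) h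

variable {F E k V : Type*} [Field F] [AddCommGroup E] [Module F E] [Field k] [AddCommGroup V]
  [Module k V] {σ : SL F E →* End k V} {ψ : AddChar F k} {x y w u : E}

open scoped Classical in
lemma card_filter_mem [Fintype E] (p : Submodule F E) :
    ({v | v ∈ p} : Finset E).card = Nat.card p := by
  rw [Nat.card_eq_fintype_card, Fintype.card_subtype]

open scoped Classical in
lemma card_filter_mem_and_ne_zero [Fintype E] (R : Type*) [Ring R] (p : Submodule F E) :
    (({v | v ∈ p ∧ v ≠ 0} : Finset E).card : R) = Nat.card p - 1 := by
  have h : ({v | v ∈ p ∧ v ≠ 0} : Finset E) = ({v | v ∈ p} : Finset E).erase 0 := by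
    ext
    simp [and_comm]
  rw [h, Finset.cast_card_erase_of_mem (by simp), card_filter_mem]

lemma exists_smul_eq_and_smul_eq [FiniteDimensional F E] (hE : 2 < finrank F E)
    (h : LinearIndependent F ![x, w])
    (h' : LinearIndependent F ![y, u]) : ∃ g : SL F E, g • x = y ∧ g • w = u := by
  obtain ⟨g, hg⟩ := exists_smul_eq_of_linearIndependent hE h h'
  exact ⟨g, hg 0, hg 1⟩

variable [Finite F] [Finite E]

lemma commute_map_weightProj {g : SL F E} (hx : g • x = x) (hw : g • w = w) :
    Commute (σ g) (weightProj σ ψ x w) := by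
  rw [Commute, SemiconjBy, map_mul_weightProj, hx, hw]

lemma trace_weightProj_zero_eq (hE : 1 < finrank F E) (hx : x ≠ 0) (hy : y ≠ 0) :
    LinearMap.trace k V (weightProj σ ψ x 0) = LinearMap.trace k V (weightProj σ ψ y 0) := by
  obtain ⟨g, hg⟩ := exists_smul_eq_of_linearIndependent hE (v := ![x]) (w := ![y])
    (linearIndependent_unique_iff.2 hx) (linearIndependent_unique_iff.2 hy)
  have := map_mul_weightProj (σ := σ) (ψ := ψ) (x := x) (w := 0) g
  rw [show g • x = y from hg 0, smul_zero] at this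
  exact trace_eq_of_map_mul_eq this

lemma trace_weightProj_eq (hE : 2 < finrank F E) (h : LinearIndependent F ![x, w])
    (h' : LinearIndependent F ![y, u]) :
    LinearMap.trace k V (weightProj σ ψ x w) = LinearMap.trace k V (weightProj σ ψ y u) := by
  obtain ⟨g, rfl, rfl⟩ := exists_smul_eq_and_smul_eq hE h h'
  exact trace_eq_of_map_mul_eq (map_mul_weightProj g)

lemma trace_weightProj_mul_eq (hE : 2 < finrank F E) (h : LinearIndependent F ![x, w])
    (h' : LinearIndependent F ![y, u]) :
    LinearMap.trace k V (weightProj σ ψ x 0 * weightProj σ ψ w 0) =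
      LinearMap.trace k V (weightProj σ ψ y 0 * weightProj σ ψ u 0) := by
  obtain ⟨g, rfl, rfl⟩ := exists_smul_eq_and_smul_eq hE h h'
  refine trace_eq_of_map_mul_eq (σ := σ) (g := g) ?_
  rw [← mul_assoc, map_mul_weightProj, mul_assoc, map_mul_weightProj, mul_assoc, smul_zero]

variable [CharZero k]

lemma natCard_mul_finrank_eq [FiniteDimensional k V] (hψ : ψ ≠ 1) (hE : 2 < finrank F E)
    (hxw : LinearIndependent F ![x, w]) :
    (Nat.card F * finrank k V : k) = Nat.card F * LinearMap.trace k V (weightProj σ ψ x 0) +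
      (Nat.card E - Nat.card F) * LinearMap.trace k V (weightProj σ ψ x w) := by
  classical
  have := Fintype.ofFinite E
  have hx : x ≠ 0 := hxw.ne_zero 0
  have hsum := congrArg (LinearMap.trace k V) (sum_weightProj (σ := σ) hψ hx)
  rw [map_sum, map_smul, LinearMap.trace_one, smul_eq_mul] at hsum
  have hmem (v) (hv : v ∈ ({v | v ∈ F ∙ x} : Finset E)) :
      LinearMap.trace k V (weightProj σ ψ x v) = LinearMap.trace k V (weightProj σ ψ x 0) := by
    rw [weightProj_congr (u := 0) (by simpa using hv)]
  have hnotMem (v) (hv : v ∉ ({v | v ∈ F ∙ x} : Finset E)) :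
      LinearMap.trace k V (weightProj σ ψ x v) = LinearMap.trace k V (weightProj σ ψ x w) :=
    trace_weightProj_eq hE ((linearIndependent_pair_iff_notMem_span hx).2 (by simpa using hv)) hxw
  rw [← hsum, sum_eq_card_mul_add (Finset.subset_univ _) hmem fun v _ ↦ hnotMem v,
    card_filter_mem, natCard_span_singleton hx, Finset.card_univ, Nat.card_eq_fintype_card (α := E)]

lemma eq_one_of_trace_weightProj_eq_zero [FiniteDimensional k V] (hψ : ψ ≠ 1)
    (hE : 2 < finrank F E) (hxw : LinearIndependent F ![x, w])
    (h : LinearMap.trace k V (weightProj σ ψ x w) = 0) : σ = 1 := by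
  classical
  have := Fintype.ofFinite E
  have hF : (Nat.card F : k) ≠ 0 := Nat.cast_ne_zero.2 Nat.card_pos.ne'
  refine eq_one_of_forall_transvec hE.le fun y φ hφ ↦ ?_
  rcases eq_or_ne y 0 with rfl | hy
  · rw [show transvec hφ = 1 from FaithfulSMul.eq_of_smul_eq_smul (α := E) fun v ↦ by
      simp [transvec_smul], map_one]
  have hzero (v) (hv : v ∉ F ∙ y) : weightProj σ ψ y v = 0 := by
    refine LinearMap.IsIdempotentElem.eq_zero_of_trace_eq_zero
      (isIdempotentElem_weightProj σ ψ y v) ?_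
    rw [← h]
    exact trace_weightProj_eq hE ((linearIndependent_pair_iff_notMem_span hy).2 hv) hxw
  have hsum := sum_weightProj (σ := σ) hψ hy
  rw [sum_eq_card_mul_add (Finset.subset_univ {v | v ∈ F ∙ y})
    (fun v hv ↦ weightProj_congr (u := 0) (by simpa using hv)) (b := 0)
    fun v _ hv ↦ hzero v (by simpa using hv), mul_zero, add_zero, card_filter_mem,
    natCard_span_singleton hy, ← nsmul_eq_mul, ← Nat.cast_smul_eq_nsmul k] at hsum
  have hone : weightProj σ ψ y 0 = 1 := smul_right_injective _ hF hsum
  simpa [hone] using map_transvec_mul_weightProj (σ := σ) (ψ := ψ) (w := 0) hφ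

end WeightTrace

section MultiplicityOne

variable {F E k V : Type*} [Field F] [AddCommGroup E] [Module F E] [Field k] [AddCommGroup V]
  [Module k V]

lemma exists_notMem_span_of_card_lt_finrank {m : ℕ} (v : Fin m → E) {p : Submodule F E}
    (h : m < finrank F p) : ∃ z ∈ p, z ∉ Submodule.span F (Set.range v) := by
  by_contra! hle
  have := FiniteDimensional.span_of_finite F (Set.finite_range v)
  have hfin := Submodule.finrank_mono (show p ≤ Submodule.span F (Set.range v) from hle)
  have hcard := finrank_range_le_card (R := F) v
  rw [Set.finrank, Fintype.card_fin] at hcard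
  omega

open scoped Classical in
lemma card_filter_mem_dualAnnihilator {x : E} [Fintype (F ∙ x).dualAnnihilator]
    {p : Submodule F E} (hp : x ∈ p) :
    ({φ | φ.1 ∈ p.dualAnnihilator} : Finset (F ∙ x).dualAnnihilator).card =
      Nat.card p.dualAnnihilator := by
  have hle : p.dualAnnihilator ≤ (F ∙ x).dualAnnihilator :=
    Submodule.dualAnnihilator_anti ((Submodule.span_singleton_le_iff_mem x p).2 hp)
  rw [← Nat.card_congr (Submodule.comapSubtypeEquivOfLe hle).toEquiv, Nat.card_eq_fintype_card,
    Fintype.card_subtype]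
  rfl

lemma natCard_span_range {m : ℕ} {v : Fin m → E} (hv : LinearIndependent F v) :
    Nat.card (Submodule.span F (Set.range v)) = Nat.card F ^ m := by
  have := FiniteDimensional.span_of_finite F (Set.finite_range v)
  rw [Module.natCard_eq_pow_finrank (K := F), finrank_span_eq_card hv, Fintype.card_fin]

variable {σ : SL F E →* End k V} {ψ : AddChar F k} {x y w u : E} {φ : Dual F E}

lemma natCard_span_pair (hxy : LinearIndependent F ![x, y]) :
    Nat.card (Submodule.span F {x, y}) = Nat.card F ^ 2 := by
  rw [← natCard_span_range hxy, Matrix.range_cons_cons_empty]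

variable [Finite F] [Finite E] [CharZero k]

lemma trace_map_transvec_mul_weightProj_eq_zero (hψ : ψ ≠ 1) (hφx : φ x = 0) (hφy : φ y = 0)
    (hφw : φ w ≠ 0) (hx : x ∉ F ∙ y) :
    LinearMap.trace k V (σ (transvec hφx) * weightProj σ ψ y w) = 0 := by
  set g := transvec hφx
  have hgy : g • y = y := transvec_smul_of_apply_eq_zero hφx hφy
  have hgw : w - g • w ∉ F ∙ y := by
    rwa [transvec_smul, sub_add_cancel_left, neg_mem_iff, Submodule.smul_mem_iff _ hφw]
  rw [← (isIdempotentElem_weightProj σ ψ y w).eq, ← mul_assoc, LinearMap.trace_mul_comm,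
    map_mul_weightProj, hgy, ← mul_assoc, weightProj_mul_weightProj_eq_zero hψ hgw, zero_mul,
    map_zero]

variable [FiniteDimensional k V]

lemma map_transvec_mul_weightProj_eq_self (hE : 5 ≤ finrank F E)
    (htr : LinearMap.trace k V (weightProj σ ψ x w) = 1) (hφx : φ x = 0) (hφw : φ w = 0)
    (hφy : φ y = 0) : σ (transvec hφy) * weightProj σ ψ x w = weightProj σ ψ x w := by
  have hker : 3 < finrank F φ.ker := by
    have hrange := φ.range.finrank_le
    rw [finrank_self] at hrange
    have := φ.finrank_range_add_finrank_ker
    omega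
  obtain ⟨z, hφz : φ z = 0, hz⟩ := exists_notMem_span_of_card_lt_finrank ![x, w, y] hker
  obtain ⟨θ, hθ, hθz⟩ := exists_dual_eq_one hz
  have hθ' (i : Fin 3) : θ (![x, w, y] i) = 0 :=
    (Submodule.mem_dualAnnihilator _).1 hθ _ (Submodule.subset_span ⟨i, rfl⟩)
  have hθx : θ x = 0 := hθ' 0
  have hθw : θ w = 0 := hθ' 1
  have hθy : θ y = 0 := hθ' 2
  rw [← commutator_transvec hθy hφz hφy hθz]
  exact map_commutator_mul_eq_self (isIdempotentElem_weightProj σ ψ x w) htr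
    (commute_map_weightProj (transvec_smul_of_apply_eq_zero _ hθx)
      (transvec_smul_of_apply_eq_zero _ hθw))
    (commute_map_weightProj (transvec_smul_of_apply_eq_zero _ hφx)
      (transvec_smul_of_apply_eq_zero _ hφw))

lemma weightProj_mul_map_transvec_eq_self (hE : 5 ≤ finrank F E)
    (htr : LinearMap.trace k V (weightProj σ ψ x w) = 1) (hφx : φ x = 0) (hφw : φ w = 0)
    (hφy : φ y = 0) : weightProj σ ψ x w * σ (transvec hφy) = weightProj σ ψ x w := by
  rw [← (commute_map_weightProj (transvec_smul_of_apply_eq_zero hφy hφx)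
    (transvec_smul_of_apply_eq_zero hφy hφw)).eq,
    map_transvec_mul_weightProj_eq_self hE htr hφx hφw hφy]

lemma weightProj_mul_weightProj_eq_zero_of_mem_span (hE : 5 ≤ finrank F E) (hψ : ψ ≠ 1)
    (htr : LinearMap.trace k V (weightProj σ ψ x u) = 1) (hu : u ∈ Submodule.span F {x, y})
    (hw : w ∉ Submodule.span F {x, y}) : weightProj σ ψ x u * weightProj σ ψ y w = 0 := by
  obtain ⟨φ, hφ, hne⟩ := exists_mem_dualAnnihilator_apply_ne_one hψ hw
  rw [Submodule.mem_dualAnnihilator] at hφ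
  have hφx : φ x = 0 := hφ x (Submodule.subset_span (by simp))
  have hφy : φ y = 0 := hφ y (Submodule.subset_span (by simp))
  refine mul_weightProj_eq_zero hφy ?_ hne.symm
  rw [one_smul, weightProj_mul_map_transvec_eq_self hE htr hφx (hφ u hu) hφy]

lemma trace_map_transvec_mul_weightProj (hE : 5 ≤ finrank F E) (hψ : ψ ≠ 1)
    (htr : LinearMap.trace k V (weightProj σ ψ y w) = 1) (hφx : φ x = 0) (hφy : φ y = 0)
    (hx : x ∉ F ∙ y) [Decidable (φ w = 0)] :
    LinearMap.trace k V (σ (transvec hφx) * weightProj σ ψ y w) = if φ w = 0 then 1 else 0 := by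
  split_ifs with hφw
  · rw [map_transvec_mul_weightProj_eq_self hE htr hφy hφw hφx, htr]
  · exact trace_map_transvec_mul_weightProj_eq_zero hψ hφx hφy hφw hx

open scoped Classical in
lemma sum_weightProj_mul_weightProj_eq [Fintype E] (hE : 5 ≤ finrank F E) (hψ : ψ ≠ 1)
    (hxy : LinearIndependent F ![x, y]) (hw : w ∉ Submodule.span F {x, y})
    (htr : ∀ a b, LinearIndependent F ![a, b] → LinearMap.trace k V (weightProj σ ψ a b) = 1) :
    (∑ u with u ∈ F ∙ y, weightProj σ ψ x u) * weightProj σ ψ y w =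
      weightProj σ ψ x 0 * weightProj σ ψ y w := by
  rw [Finset.sum_mul, Finset.sum_eq_single_of_mem 0 (by simp)]
  intro u hu hu0
  obtain ⟨c, rfl⟩ := Submodule.mem_span_singleton.1 (Finset.mem_filter.1 hu).2
  have hxu : LinearIndependent F ![x, c • y] := by
    have hx : x ≠ 0 := hxy.ne_zero 0
    rw [linearIndependent_pair_iff_notMem_span hx] at hxy ⊢
    rwa [Submodule.smul_mem_iff _ (left_ne_zero_of_smul hu0)]
  exact weightProj_mul_weightProj_eq_zero_of_mem_span hE hψ (htr _ _ hxu)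
    (Submodule.smul_mem _ c (Submodule.subset_span (by simp))) hw

lemma natCard_dualAnnihilator_mul_trace_eq (hE : 5 ≤ finrank F E) (hψ : ψ ≠ 1)
    (hxy : LinearIndependent F ![x, y]) (hw : w ∉ Submodule.span F {x, y})
    (htr : ∀ a b, LinearIndependent F ![a, b] → LinearMap.trace k V (weightProj σ ψ a b) = 1) :
    Nat.card (F ∙ x).dualAnnihilator *
        LinearMap.trace k V (weightProj σ ψ x 0 * weightProj σ ψ y w) =
      Nat.card F * Nat.card (Submodule.span F (Set.range ![w, x, y])).dualAnnihilator := by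
  classical
  have := Fintype.ofFinite E
  have := Fintype.ofFinite (F ∙ x).dualAnnihilator
  have hy : y ≠ 0 := hxy.ne_zero 1
  have hxy' : x ∉ F ∙ y :=
    (linearIndependent_pair_iff_notMem_span hy).1 (LinearIndependent.pair_symm_iff.1 hxy)
  have hyw : LinearIndependent F ![y, w] := (linearIndependent_pair_iff_notMem_span hy).2 fun h ↦
    hw (Submodule.span_mono (by simp) h)
  have htrace (φ : (F ∙ x).dualAnnihilator)
      (hφ : φ ∈ ({φ | φ.1 ∈ (F ∙ y).dualAnnihilator} : Finset (F ∙ x).dualAnnihilator)) :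
      LinearMap.trace k V (σ (transvecHom F x (.ofAdd φ)) * weightProj σ ψ y w) =
        if φ.1 w = 0 then 1 else 0 :=
    trace_map_transvec_mul_weightProj hE hψ (htr y w hyw)
      (mem_dualAnnihilator_span_singleton.1 φ.2)
      (mem_dualAnnihilator_span_singleton.1 (Finset.mem_filter.1 hφ).2) hxy'
  rw [← sum_weightProj_mul_weightProj_eq hE hψ hxy hw htr, ← smul_eq_mul, ← map_smul,
    ← smul_mul_assoc, natCard_smul_sum_weightProj hψ, natCard_span_singleton hy, smul_mul_assoc,
    map_smul, smul_eq_mul, Finset.sum_mul, map_sum, Finset.sum_congr rfl htrace, Finset.sum_boole,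
    Finset.filter_filter, ← card_filter_mem_dualAnnihilator (x := x)
      (p := Submodule.span F (Set.range ![w, x, y])) (Submodule.subset_span ⟨1, rfl⟩)]
  congr! 4 with φ
  have hφx := mem_dualAnnihilator_span_singleton.1 φ.2
  rw [mem_dualAnnihilator_span_singleton, mem_dualAnnihilator_span, Set.forall_mem_range]
  simp [Fin.forall_fin_succ, hφx, and_comm]

lemma natCard_mul_trace_weightProj_zero_mul_weightProj (hE : 5 ≤ finrank F E) (hψ : ψ ≠ 1)
    (hxy : LinearIndependent F ![x, y]) (hw : w ∉ Submodule.span F {x, y})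
    (htr : ∀ a b, LinearIndependent F ![a, b] → LinearMap.trace k V (weightProj σ ψ a b) = 1) :
    Nat.card F * LinearMap.trace k V (weightProj σ ψ x 0 * weightProj σ ψ y w) = 1 := by
  have hx : x ≠ 0 := hxy.ne_zero 0
  have hwxy : LinearIndependent F ![w, x, y] :=
    linearIndependent_finCons.2 ⟨hxy, by rwa [Matrix.range_cons_cons_empty]⟩
  have hsum := natCard_dualAnnihilator_mul_trace_eq hE hψ hxy hw htr
  set B := (Submodule.span F (Set.range ![w, x, y])).dualAnnihilator
  have hF : (Nat.card F : k) ≠ 0 := Nat.cast_ne_zero.2 Nat.card_pos.ne'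
  have hB : (Nat.card B : k) ≠ 0 := Nat.cast_ne_zero.2 Nat.card_pos.ne'
  have hcard : (Nat.card (F ∙ x).dualAnnihilator * Nat.card F : k) =
      Nat.card B * Nat.card F ^ 3 := by
    have := (natCard_dualAnnihilator_mul_natCard (F ∙ x)).trans
      (natCard_dualAnnihilator_mul_natCard (Submodule.span F (Set.range ![w, x, y]))).symm
    rw [natCard_span_singleton hx, natCard_span_range hwxy] at this
    exact_mod_cast this
  refine mul_left_cancel₀ (mul_ne_zero hB (pow_ne_zero 2 hF)) ?_
  linear_combination Nat.card F * hsum -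
    LinearMap.trace k V (weightProj σ ψ x 0 * weightProj σ ψ y w) * hcard

end MultiplicityOne

/-! ### Invariants of the unipotent radical of a plane -/

section InvariantProj

variable {A G k R : Type*} [Group A] [Group G] [Field k] [Ring R] [Algebra k R]

lemma commute_charProj [Finite A] {τ : A →* R} {χ : A →* k} {r : R} (h : ∀ a, Commute r (τ a)) :
    Commute r (charProj τ χ) :=
  semiconj_charProj (.refl A) h fun _ ↦ rfl

/-- The projection of a representation `σ` onto the vectors fixed by the subgroup `H`. -/
noncomputable def invariantProj (k : Type*) [Field k] [Algebra k R] (σ : G →* R) (H : Subgroup G) :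
    R :=
  charProj (σ.comp H.subtype) (1 : H →* k)

variable {σ : G →* R} {H : Subgroup G} [Finite H] {g : G}

lemma invariantProj_mul_map (hg : g ∈ H) : invariantProj k σ H * σ g = invariantProj k σ H :=
  (charProj_mul_apply (σ.comp H.subtype) (1 : H →* k) ⟨g, hg⟩).trans (one_smul _ _)

lemma commute_map_invariantProj (hg : g ∈ Subgroup.normalizer (H : Set G)) :
    Commute (σ g) (invariantProj k σ H) := by
  refine semiconj_charProj (H.normalizerMonoidHom ⟨g, hg⟩) (fun h ↦ ?_) fun _ ↦ rfl
  simp [← map_mul]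

lemma isIdempotentElem_invariantProj [CharZero k] :
    IsIdempotentElem (invariantProj k σ H) :=
  isIdempotentElem_charProj _ _

end InvariantProj

section Parabolic

variable {F E k V : Type*} [Field F] [AddCommGroup E] [Module F E] [Field k] [AddCommGroup V]
  [Module k V] {D : Submodule F E} {x y z w : E} {φ : Dual F E} {g : SL F E}

lemma mem_normalizer_unipotentRadical (hg : ∀ v, g • v ∈ D ↔ v ∈ D) :
    g ∈ Subgroup.normalizer (unipotentRadical D : Set (SL F E)) := by
  refine Subgroup.mem_normalizer_iff.2 fun h ↦ and_congr ?_ ?_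
  · refine Iff.trans ?_ (MulAction.surjective g).forall.symm
    simp [mul_smul, hg]
  · refine Iff.trans ?_ (MulAction.surjective g).forall.symm
    simp [mul_smul, ← smul_sub, hg]

lemma transvec_mem_unipotentRadical (hφx : φ x = 0) (hx : x ∈ D) (hφ : φ ∈ D.dualAnnihilator) :
    transvec hφx ∈ unipotentRadical D := by
  rw [Submodule.mem_dualAnnihilator] at hφ
  refine ⟨fun v hv ↦ transvec_smul_of_apply_eq_zero hφx (hφ v hv), fun v ↦ ?_⟩
  rw [transvec_smul, add_sub_cancel_left]
  exact D.smul_mem _ hx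

lemma transvec_smul_mem_iff (hφx : φ x = 0) (hx : x ∈ D) (v : E) :
    transvec hφx • v ∈ D ↔ v ∈ D := by
  rw [transvec_smul, D.add_mem_iff_left (D.smul_mem _ hx)]

lemma smul_mem_iff_of_mem_unipotentRadical (hg : g ∈ unipotentRadical D) (v : E) :
    g • v ∈ D ↔ v ∈ D := by
  rw [← sub_add_cancel (g • v) v, D.add_mem_iff_right (hg.2 v)]

variable [Finite E] {σ : SL F E →* End k V} {ψ : AddChar F k} {r : End k V}

lemma commute_invariantProj (h : ∀ g : SL F E, (∀ v, g • v ∈ D ↔ v ∈ D) → Commute r (σ g)) :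
    Commute r (invariantProj k σ (unipotentRadical D)) :=
  commute_charProj fun g ↦ h _ (smul_mem_iff_of_mem_unipotentRadical g.2)

variable [Finite F]

lemma commute_weightProj (h : ∀ g : SL F E, (∀ v, g • v ∈ D ↔ v ∈ D) → Commute r (σ g))
    (hz : z ∈ D) : Commute r (weightProj σ ψ z w) :=
  commute_charProj (A := Multiplicative (F ∙ z).dualAnnihilator) fun _ ↦
    h _ (transvec_smul_mem_iff _ hz)

lemma invariantProj_mul_weightProj_eq_zero (hψ : ψ ≠ 1) (hy : y ∈ D) (hw : w ∉ D) :
    invariantProj k σ (unipotentRadical D) * weightProj σ ψ y w = 0 := by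
  obtain ⟨φ, hφ, hne⟩ := exists_mem_dualAnnihilator_apply_ne_one hψ hw
  have hφy : φ y = 0 := (Submodule.mem_dualAnnihilator _).1 hφ y hy
  refine mul_weightProj_eq_zero hφy ?_ hne.symm
  rw [one_smul, invariantProj_mul_map (transvec_mem_unipotentRadical hφy hy hφ)]

lemma commute_invariantProj_weightProj (hz : z ∈ D) :
    Commute (invariantProj k σ (unipotentRadical D)) (weightProj σ ψ z w) :=
  commute_weightProj (fun _ hg ↦
    (commute_map_invariantProj (mem_normalizer_unipotentRadical hg)).symm) hz

variable [CharZero k]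

lemma weightProj_mul_invariantProj_mul_weightProj (hxy : LinearIndependent F ![x, y])
    (hw : w ∈ Submodule.span F {x, y}) :
    weightProj σ ψ x 0 * invariantProj k σ (unipotentRadical (Submodule.span F {x, y})) *
      weightProj σ ψ y w = weightProj σ ψ x 0 * weightProj σ ψ y w := by
  refine mul_charProj_one_mul_eq fun g ↦ ?_
  obtain ⟨φ, -, θ, hθ, hφx, hθy, hg⟩ := exists_transvec_mul_transvec_eq hxy g.2
  have hθw : θ w = 0 := (Submodule.mem_dualAnnihilator _).1 hθ w hw
  rw [MonoidHom.comp_apply, Subgroup.subtype_apply, hg, map_mul, ← mul_assoc,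
    weightProj_mul_map_transvec, map_zero, AddChar.map_zero_eq_one, one_smul, mul_assoc,
    map_transvec_mul_weightProj, hθw, AddChar.map_zero_eq_one, one_smul]

lemma sq_mul_trace_invariantProj [FiniteDimensional k V] (hE : 5 ≤ finrank F E) (hψ : ψ ≠ 1)
    (hxy : LinearIndependent F ![x, y])
    (htr : ∀ a b, LinearIndependent F ![a, b] → LinearMap.trace k V (weightProj σ ψ a b) = 1) :
    (Nat.card F : k) ^ 2 * LinearMap.trace k V (weightProj σ ψ x 0) =
      Nat.card F ^ 2 * LinearMap.trace k V (weightProj σ ψ x 0 *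
        invariantProj k σ (unipotentRadical (Submodule.span F {x, y}))) +
      (Nat.card E - Nat.card F ^ 2) := by
  classical
  have := Fintype.ofFinite E
  set D := Submodule.span F {x, y}
  set e := invariantProj k σ (unipotentRadical D)
  have hy : y ∈ D := Submodule.subset_span (by simp)
  have hy0 : y ≠ 0 := hxy.ne_zero 1
  have hsum (a : End k V) : Nat.card F * LinearMap.trace k V a =
      ∑ w, LinearMap.trace k V (a * weightProj σ ψ y w) := by
    rw [← map_sum, ← Finset.mul_sum, sum_weightProj hψ hy0, mul_smul_one, map_smul,
      smul_eq_mul]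
  have hdiff (w : E) : Nat.card F * LinearMap.trace k V (weightProj σ ψ x 0 * weightProj σ ψ y w) -
      Nat.card F * LinearMap.trace k V (weightProj σ ψ x 0 * e * weightProj σ ψ y w) =
      if w ∈ D then 0 else 1 := by
    split_ifs with hw
    · rw [weightProj_mul_invariantProj_mul_weightProj hxy hw, sub_self]
    · rw [mul_assoc, invariantProj_mul_weightProj_eq_zero hψ hy hw, mul_zero, map_zero, mul_zero,
        sub_zero, natCard_mul_trace_weightProj_zero_mul_weightProj hE hψ hxy hw htr]
  have hcount : ∑ w, (if w ∈ D then (0 : k) else 1) = Nat.card E - Nat.card F ^ 2 := by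
    rw [sum_eq_card_mul_add (Finset.subset_univ {w | w ∈ D}) (a := 0) (b := 1) (by simp)
      (by simp), card_filter_mem, natCard_span_pair hxy, Finset.card_univ,
      Nat.card_eq_fintype_card (α := E)]
    simp
  rw [← hcount, Finset.sum_congr rfl fun w _ ↦ (hdiff w).symm, Finset.sum_sub_distrib,
    ← Finset.mul_sum, ← Finset.mul_sum, ← hsum, ← hsum]
  ring

end Parabolic

section Defect

variable {F E k V : Type*} [Field F] [AddCommGroup E] [Module F E] [Field k] [AddCommGroup V]
  [Module k V] {D : Submodule F E} {x y z w : E} {g : SL F E}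

lemma span_pair_eq_of_mem (hxy : LinearIndependent F ![x, y]) (hzw : LinearIndependent F ![z, w])
    (hz : z ∈ Submodule.span F {x, y}) (hw : w ∈ Submodule.span F {x, y}) :
    Submodule.span F {z, w} = Submodule.span F {x, y} := by
  have := FiniteDimensional.span_of_finite F (Set.toFinite {x, y})
  refine Submodule.eq_of_le_of_finrank_eq
    (Submodule.span_le.2 (by simp [Set.pair_subset_iff, hz, hw])) ?_
  rw [← Matrix.range_cons_cons_empty z w ![], ← Matrix.range_cons_cons_empty x y ![],
    finrank_span_eq_card hzw, finrank_span_eq_card hxy]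

lemma exists_linearIndependent_pair_mem (hxy : LinearIndependent F ![x, y]) (hz0 : z ≠ 0) :
    ∃ w ∈ Submodule.span F {x, y}, LinearIndependent F ![z, w] := by
  by_contra! h
  have hmem (w) (hw : w ∈ Submodule.span F {x, y}) : w ∈ F ∙ z := by
    by_contra hwz
    exact h w hw ((linearIndependent_pair_iff_notMem_span hz0).2 hwz)
  have hle : Submodule.span F (Set.range ![x, y]) ≤ F ∙ z := by
    rwa [Matrix.range_cons_cons_empty]
  have hfin := Submodule.finrank_mono hle
  rw [finrank_span_eq_card hxy, finrank_span_singleton hz0] at hfin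
  simp at hfin

lemma exists_smul_eq_and_smul_mem_iff [FiniteDimensional F E] (hE : 2 < finrank F E)
    (hxy : LinearIndependent F ![x, y]) (hz : z ∈ Submodule.span F {x, y}) (hz0 : z ≠ 0) :
    ∃ g : SL F E, g • z = x ∧
      ∀ v, g • v ∈ Submodule.span F {x, y} ↔ v ∈ Submodule.span F {x, y} := by
  obtain ⟨w, hw, hzw⟩ := exists_linearIndependent_pair_mem hxy hz0
  obtain ⟨g, hgz, hgw⟩ := exists_smul_eq_and_smul_eq hE hzw hxy
  refine ⟨g, hgz, fun v ↦ ?_⟩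
  conv_rhs => rw [← span_pair_eq_of_mem hxy hzw hz hw]
  rw [← hgz, ← hgw, Submodule.mem_span_pair, Submodule.mem_span_pair]
  refine exists_congr fun a ↦ exists_congr fun b ↦ ?_
  rw [← smul_comm g a, ← smul_comm g b, ← smul_add, smul_left_cancel_iff]

variable {σ : SL F E →* End k V} {ψ : AddChar F k} [Finite F] [Finite E]

lemma weightProj_smul_smul {c : F} (hc : c ≠ 0) :
    weightProj σ ψ (c • x) (c • w) = weightProj σ ψ x w := by
  have hspan : (F ∙ (c • x)) = F ∙ x := Submodule.span_singleton_smul_eq hc.isUnit x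
  let e : (F ∙ (c • x)).dualAnnihilator ≃ₗ[F] (F ∙ x).dualAnnihilator :=
    LinearEquiv.ofEq _ _ (by rw [hspan]) ≪≫ₗ LinearEquiv.smulOfUnit (Units.mk0 c hc)
  rw [← one_mul (weightProj σ ψ (c • x) _), ← mul_one (weightProj σ ψ x w)]
  refine semiconj_charProj (AddEquiv.toMultiplicative e.toAddEquiv) (fun φ ↦ ?_) fun φ ↦ ?_
  · rw [one_mul, mul_one]
    refine congrArg σ (FaithfulSMul.eq_of_smul_eq_smul (α := E) fun v ↦ ?_)
    refine congrArg (v + ·) ?_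
    change (φ.toAdd : Dual F E) v • c • x = (c * (φ.toAdd : Dual F E) v) • x
    rw [smul_smul, mul_comm]
  · exact congrArg ψ (((φ.toAdd : Dual F E).map_smul c w).symm)

/-- The projection onto the vectors fixed both by the transvections in the direction `z` and by the
unipotent radical of the stabilizer of `D`. -/
noncomputable def fixedProj (σ : SL F E →* End k V) (ψ : AddChar F k) (D : Submodule F E) (z : E) :
    End k V :=
  weightProj σ ψ z 0 * invariantProj k σ (unipotentRadical D)

lemma map_mul_fixedProj (hg : ∀ v, g • v ∈ D ↔ v ∈ D) (z : E) :
    σ g * fixedProj σ ψ D z = fixedProj σ ψ D (g • z) * σ g := by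
  rw [fixedProj, ← mul_assoc, map_mul_weightProj, smul_zero, mul_assoc,
    (commute_map_invariantProj (mem_normalizer_unipotentRadical hg)).eq, ← mul_assoc, fixedProj]

open scoped Classical in
lemma commute_sum_fixedProj_map [Fintype E] (hg : ∀ v, g • v ∈ D ↔ v ∈ D) :
    Commute (∑ z with z ∈ D ∧ z ≠ 0, fixedProj σ ψ D z) (σ g) := by
  rw [Commute, SemiconjBy, Finset.mul_sum, Finset.sum_mul]
  refine (Finset.sum_equiv (MulAction.toPerm g) (by simp [hg, smul_eq_zero_iff_eq])
    fun z _ ↦ ?_).symm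
  exact map_mul_fixedProj hg z

variable [CharZero k]

lemma isIdempotentElem_fixedProj (hz : z ∈ D) : IsIdempotentElem (fixedProj σ ψ D z) :=
  .mul_of_commute (commute_invariantProj_weightProj hz).symm
    (isIdempotentElem_weightProj σ ψ z 0) (isIdempotentElem_invariantProj)

lemma fixedProj_mul_fixedProj (hz : z ∈ D) : fixedProj σ ψ D x * fixedProj σ ψ D z =
    weightProj σ ψ x 0 * (invariantProj k σ (unipotentRadical D) * weightProj σ ψ z 0) := by
  rw [fixedProj, fixedProj, mul_assoc,
    ← (commute_invariantProj_weightProj hz).eq, ← mul_assoc (invariantProj ..),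
    (isIdempotentElem_invariantProj).eq]

lemma fixedProj_mul_fixedProj_of_linearIndependent (hxy : LinearIndependent F ![x, y])
    (hz : z ∈ Submodule.span F {x, y}) (hxz : LinearIndependent F ![x, z]) :
    fixedProj σ ψ (Submodule.span F {x, y}) x * fixedProj σ ψ (Submodule.span F {x, y}) z =
      weightProj σ ψ x 0 * weightProj σ ψ z 0 := by
  rw [fixedProj_mul_fixedProj hz, ← mul_assoc,
    ← span_pair_eq_of_mem hxy hxz (Submodule.subset_span (by simp)) hz,
    weightProj_mul_invariantProj_mul_weightProj hxz (zero_mem _)]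

open scoped Classical in
lemma trace_fixedProj_mul_sum [Fintype E] (hE : 2 < finrank F E)
    (hxy : LinearIndependent F ![x, y]) :
    LinearMap.trace k V (fixedProj σ ψ (Submodule.span F {x, y}) x *
      ∑ z with z ∈ Submodule.span F {x, y} ∧ z ≠ 0, fixedProj σ ψ (Submodule.span F {x, y}) z) =
    (Nat.card F - 1) * LinearMap.trace k V (fixedProj σ ψ (Submodule.span F {x, y}) x) +
      (Nat.card F ^ 2 - Nat.card F) *
        LinearMap.trace k V (weightProj σ ψ x 0 * weightProj σ ψ y 0) := by
  have hx0 : x ≠ 0 := hxy.ne_zero 0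
  have hxD : x ∈ Submodule.span F {x, y} := Submodule.subset_span (by simp)
  have hle : F ∙ x ≤ Submodule.span F {x, y} := Submodule.span_mono (by simp)
  have hsub : ({z | z ∈ F ∙ x ∧ z ≠ 0} : Finset E) ⊆
      ({z | z ∈ Submodule.span F {x, y} ∧ z ≠ 0} : Finset E) :=
    Finset.monotone_filter_right _ fun z _ hz ↦ hz.imp_left (@hle z)
  rw [Finset.mul_sum, map_sum, sum_eq_card_mul_add hsub
    (a := LinearMap.trace k V (fixedProj σ ψ (Submodule.span F {x, y}) x))
    (b := LinearMap.trace k V (weightProj σ ψ x 0 * weightProj σ ψ y 0)),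
    card_filter_mem_and_ne_zero, card_filter_mem_and_ne_zero, natCard_span_singleton hx0,
    natCard_span_pair hxy]
  · push_cast
    ring
  · intro z hz
    obtain ⟨hz, hz0⟩ := (Finset.mem_filter.1 hz).2
    obtain ⟨c, rfl⟩ := Submodule.mem_span_singleton.1 hz
    have hfixed : fixedProj σ ψ (Submodule.span F {x, y}) (c • x) =
        fixedProj σ ψ (Submodule.span F {x, y}) x := by
      rw [fixedProj, ← smul_zero c, weightProj_smul_smul fun hc ↦ hz0 (by rw [hc, zero_smul]),
        fixedProj]
    rw [hfixed, (isIdempotentElem_fixedProj hxD).eq]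
  · intro z hz hzx
    obtain ⟨hz, hz0⟩ := (Finset.mem_filter.1 hz).2
    have hxz : LinearIndependent F ![x, z] :=
      (linearIndependent_pair_iff_notMem_span hx0).2 fun h ↦ hzx (by simp [h, hz0])
    rw [fixedProj_mul_fixedProj_of_linearIndependent hxy hz hxz, trace_weightProj_mul_eq hE hxz hxy]

theorem exists_trace_fixedProj_sub_eq [FiniteDimensional k V] [IsAlgClosed k] (hE : 2 < finrank F E)
    (hxy : LinearIndependent F ![x, y]) : ∃ Δ : ℚ, (Δ = 0 ∨ 1 / 2 ≤ Δ) ∧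
      Nat.card F * (LinearMap.trace k V (fixedProj σ ψ (Submodule.span F {x, y}) x) -
        LinearMap.trace k V (weightProj σ ψ x 0 * weightProj σ ψ y 0)) =
      (Nat.card F + 1) * (Δ : k) := by
  classical
  have := Fintype.ofFinite E
  set D := Submodule.span F {x, y}
  have hxD : x ∈ D := Submodule.subset_span (by simp)
  have hmem {z : E} : z ∈ ({z | z ∈ D ∧ z ≠ 0} : Finset E) ↔ z ∈ D ∧ z ≠ 0 := by simp
  have hcommute (g : SL F E) (hg : ∀ v, g • v ∈ D ↔ v ∈ D) :
      Commute (∑ z with z ∈ D ∧ z ≠ 0, fixedProj σ ψ D z) (σ g) := commute_sum_fixedProj_map hg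
  obtain ⟨Δ, hΔ, h⟩ := exists_trace_defect (f := fixedProj σ ψ D) (i₀ := x)
    (s := {z | z ∈ D ∧ z ≠ 0}) (isIdempotentElem_fixedProj hxD) (hmem.2 ⟨hxD, hxy.ne_zero 0⟩)
    (fun z hz ↦ (commute_weightProj hcommute (hmem.1 hz).1).mul_right
      (commute_invariantProj hcommute)) fun z hz ↦ by
    obtain ⟨g, hgz, hg⟩ := exists_smul_eq_and_smul_mem_iff hE hxy (hmem.1 hz).1 (hmem.1 hz).2
    exact ⟨Units.map σ (toUnits g), hcommute g hg, hgz ▸ map_mul_fixedProj hg z⟩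
  refine ⟨Δ, hΔ, ?_⟩
  rw [trace_fixedProj_mul_sum hE hxy, card_filter_mem_and_ne_zero, natCard_span_pair hxy] at h
  have hcard : (Nat.card F - 1 : k) ≠ 0 :=
    sub_ne_zero.2 (by exact_mod_cast Finite.one_lt_card.ne')
  refine mul_left_cancel₀ hcard ?_
  push_cast at h
  linear_combination h

end Defect

/-! ### Schur's lemma and the lower bound -/

section Schur

lemma exists_eq_smul_one_of_commute {G k V : Type*} [Monoid G] [Field k] [IsAlgClosed k]
    [AddCommGroup V] [Module k V] [FiniteDimensional k V] {ρ : Representation k G V}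
    [ρ.IsIrreducible] {T : End k V} (hT : ∀ g, Commute T (ρ g)) : ∃ c : k, T = c • 1 := by
  let f : Representation.IntertwiningMap ρ ρ := ⟨T, fun g ↦ hT g⟩
  obtain ⟨c, hc⟩ :=
    (Representation.IsIrreducible.algebraMap_intertwiningMap_bijective_of_isAlgClosed).2 f
  exact ⟨c, congrArg Representation.IntertwiningMap.toLinearMap hc.symm⟩

variable {F E k V : Type*} [Field F] [AddCommGroup E] [Module F E] [Field k] [AddCommGroup V]
  [Module k V] {σ : Representation k (SL F E) V} {ψ : AddChar F k} {x y : E}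
  [Finite F] [Finite E]

open scoped Classical in
lemma commute_sum_weightProj_map [Fintype E] (g : SL F E) :
    Commute (∑ z with z ≠ 0, weightProj σ ψ z 0) (σ g) := by
  rw [Commute, SemiconjBy, Finset.mul_sum, Finset.sum_mul]
  refine (Finset.sum_equiv (MulAction.toPerm g) (by simp [smul_eq_zero_iff_eq]) fun z _ ↦ ?_).symm
  simpa using map_mul_weightProj (σ := σ) (ψ := ψ) (x := z) (w := 0) g

open scoped Classical in
lemma trace_weightProj_mul_sum [Fintype E] [CharZero k] (hE : 2 < finrank F E)
    (hxy : LinearIndependent F ![x, y]) :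
    LinearMap.trace k V (weightProj σ ψ x 0 * ∑ z with z ≠ 0, weightProj σ ψ z 0) =
    (Nat.card F - 1) * LinearMap.trace k V (weightProj σ ψ x 0) +
      (Nat.card E - Nat.card F) *
        LinearMap.trace k V (weightProj σ ψ x 0 * weightProj σ ψ y 0) := by
  have hx0 : x ≠ 0 := hxy.ne_zero 0
  have hsub : ({z | z ∈ F ∙ x ∧ z ≠ 0} : Finset E) ⊆ ({z | z ≠ 0} : Finset E) :=
    Finset.monotone_filter_right _ fun z _ hz ↦ hz.2
  rw [Finset.mul_sum, map_sum, sum_eq_card_mul_add hsub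
    (a := LinearMap.trace k V (weightProj σ ψ x 0))
    (b := LinearMap.trace k V (weightProj σ ψ x 0 * weightProj σ ψ y 0)),
    card_filter_mem_and_ne_zero, card_filter_ne_zero, natCard_span_singleton hx0]
  · ring
  · intro z hz
    obtain ⟨hz, hz0⟩ := (Finset.mem_filter.1 hz).2
    obtain ⟨c, rfl⟩ := Submodule.mem_span_singleton.1 hz
    rw [← smul_zero c, weightProj_smul_smul fun hc ↦ hz0 (by rw [hc, zero_smul]), smul_zero,
      (isIdempotentElem_weightProj σ ψ x 0).eq]
  · intro z hz hzx
    exact trace_weightProj_mul_eq hE ((linearIndependent_pair_iff_notMem_span hx0).2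
      fun h ↦ hzx (by simpa [h] using hz)) hxy

theorem natCard_sub_one_mul_sq_trace_weightProj_zero [IsAlgClosed k] [CharZero k]
    [FiniteDimensional k V] [σ.IsIrreducible] (hE : 2 < finrank F E)
    (hxy : LinearIndependent F ![x, y]) :
    (Nat.card E - 1 : k) * LinearMap.trace k V (weightProj σ ψ x 0) ^ 2 =
      finrank k V * ((Nat.card F - 1) * LinearMap.trace k V (weightProj σ ψ x 0) +
      (Nat.card E - Nat.card F) *
        LinearMap.trace k V (weightProj σ ψ x 0 * weightProj σ ψ y 0)) := by
  classical
  have := Fintype.ofFinite E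
  obtain ⟨c, hc⟩ := exists_eq_smul_one_of_commute (commute_sum_weightProj_map (σ := σ) (ψ := ψ))
  have hx0 : x ≠ 0 := hxy.ne_zero 0
  have hmul := trace_weightProj_mul_sum (σ := σ) (ψ := ψ) hE hxy
  rw [hc, mul_smul_one, map_smul, smul_eq_mul] at hmul
  have hsum := congrArg (LinearMap.trace k V) hc
  rw [map_sum, Finset.sum_congr rfl fun z hz ↦ trace_weightProj_zero_eq (by lia)
    (Finset.mem_filter.1 hz).2 hx0, Finset.sum_const, nsmul_eq_mul,
    card_filter_ne_zero, map_smul, LinearMap.trace_one, smul_eq_mul] at hsum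
  linear_combination LinearMap.trace k V (weightProj σ ψ x 0) * hsum + finrank k V * hmul

end Schur

section Arithmetic

lemma sub_lt_mul_sub_one {q P d Δ : ℚ} (hq : 2 ≤ q) (hP : 1 ≤ P) (hd : 0 ≤ d) (hΔ : 1 / 2 ≤ Δ)
    (h : (d + P - 1) * (P - q + (q + 1) * Δ) = (q * P - 1) * d) : P - q < d * (q - 1) := by
  have hle : (d + P - 1) * (P - q + (q + 1) * (1 / 2)) ≤ (q * P - 1) * d := by
    rw [← h]
    gcongr
    linarith
  by_contra! hd'
  have hpos : 0 < (q - 1) * P + (q - 3) / 2 := by nlinarith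
  nlinarith [mul_le_mul_of_nonneg_right hd' hpos.le, mul_nonneg (sub_nonneg.2 hq) (sub_nonneg.2 hP),
    mul_nonneg (mul_nonneg (sub_nonneg.2 hq) (sub_nonneg.2 hP)) (sub_nonneg.2 hq)]

lemma add_sub_one_mul_sub_ne {q P d : ℤ} (hq : 0 ≤ q) (hP : 2 * q + 1 < P) :
    (d + P - 1) * (P - q) ≠ (q * P - 1) * d := by
  intro h
  have hdvd : P + 1 ∣ 2 * (q + 1) := ⟨d * (q - 1) - (P - q - 2), by linear_combination h⟩
  have := Int.le_of_dvd (by lia) hdvd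
  lia

lemma mul_sub_one_le_of_sub_lt {q P d : ℤ} (hq : 1 < q) (hdvd : q - 1 ∣ P - 1)
    (h : P - q < d * (q - 1)) : q * (P - 1) ≤ (d + P - 1) * (q - 1) := by
  obtain ⟨r, hr⟩ := hdvd
  have hrd : r - 1 < d := lt_of_mul_lt_mul_right (a := q - 1) (by linarith) (by lia)
  have := mul_le_mul_of_nonneg_right (Int.le_of_sub_one_lt hrd) (sub_nonneg.2 hq.le)
  nlinarith

lemma add_sub_one_mul_add_eq {k : Type*} [Field k] {N q P d d' s Δ : k} (hq : q ≠ 0) (hP : P ≠ 1)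
    (hN : q * N = q * d + (q * P - q)) (hd' : q ^ 2 * d = q ^ 2 * d' + (q * P - q ^ 2))
    (hΔ : q * (d' - s) = (q + 1) * Δ)
    (hs : (q * P - 1) * d ^ 2 = N * ((q - 1) * d + (q * P - q) * s)) :
    (d + P - 1) * (P - q + (q + 1) * Δ) = (q * P - 1) * d := by
  have hN' : N = d + P - 1 := mul_left_cancel₀ hq (by linear_combination hN)
  have hd'' : q * d = q * d' + P - q := mul_left_cancel₀ hq (by linear_combination hd')
  refine mul_left_cancel₀ (sub_ne_zero.2 hP) ?_
  subst hN'
  linear_combination hs - (d + P - 1) * (P - 1) * hd'' - (d + P - 1) * (P - 1) * hΔ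

lemma mul_sub_one_le_of_defect {q P d : ℤ} {Δ : ℚ} (hq : 1 < q) (hP : 2 * q + 1 < P)
    (hdvd : q - 1 ∣ P - 1) (hd : 0 ≤ d) (hΔ : Δ = 0 ∨ 1 / 2 ≤ Δ)
    (h : (d + P - 1 : ℚ) * (P - q + (q + 1) * Δ) = (q * P - 1) * d) :
    q * (P - 1) ≤ (d + P - 1) * (q - 1) := by
  refine mul_sub_one_le_of_sub_lt hq hdvd ?_
  rcases hΔ with rfl | hΔ
  · rw [mul_zero, add_zero] at h
    exact absurd (by exact_mod_cast h) (add_sub_one_mul_sub_ne (d := d) (by lia) hP)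
  · have hq' : (2 : ℚ) ≤ q := by exact_mod_cast hq
    have hP' : (1 : ℚ) ≤ P := by exact_mod_cast (by lia : 1 ≤ P)
    exact_mod_cast sub_lt_mul_sub_one hq' hP' (by exact_mod_cast hd) hΔ h

end Arithmetic

section LowerBound

variable {F E k V : Type*} [Field F] [Finite F] [AddCommGroup E] [Module F E] [Finite E]
  [Field k] [CharZero k] [AddCommGroup V] [Module k V] [FiniteDimensional k V]

lemma exists_trace_weightProj_eq_natCast (σ : Representation k (SL F E) V) (ψ : AddChar F k)
    (x w : E) : ∃ d : ℕ, LinearMap.trace k V (weightProj σ ψ x w) = d :=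
  ⟨_, trace_eq_finrank_range (isIdempotentElem_weightProj σ ψ x w)⟩

variable [IsAlgClosed k] {σ : Representation k (SL F E) V} {ψ : AddChar F k} {x w : E}

theorem natCard_sub_le_finrank_mul_of_trace_eq_one [σ.IsIrreducible] (hψ : ψ ≠ 1)
    (hE : 5 ≤ finrank F E) (hxw : LinearIndependent F ![x, w])
    (h : LinearMap.trace k V (weightProj σ ψ x w) = 1) :
    (Nat.card E - Nat.card F : ℤ) ≤ finrank k V * (Nat.card F - 1) := by
  have htr (a b) (hab : LinearIndependent F ![a, b]) :
      LinearMap.trace k V (weightProj σ ψ a b) = 1 :=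
    (trace_weightProj_eq (by lia) hab hxw).trans h
  obtain ⟨d, hd⟩ := exists_trace_weightProj_eq_natCast σ ψ x 0
  obtain ⟨Δ, hΔ, hΔs⟩ := exists_trace_fixedProj_sub_eq (σ := σ) (ψ := ψ) (by lia) hxw
  have hN := natCard_mul_finrank_eq (σ := σ) hψ (by lia) hxw
  have hd' := sq_mul_trace_invariantProj hE hψ hxw htr
  have hs := natCard_sub_one_mul_sq_trace_weightProj_zero (σ := σ) (ψ := ψ) (by lia) hxw
  have hq : 1 < Nat.card F := Finite.one_lt_card
  obtain ⟨m, hm⟩ := Nat.exists_eq_add_of_le' hE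
  have hcard : Nat.card E = Nat.card F * Nat.card F ^ (m + 4) := by
    rw [Module.natCard_eq_pow_finrank (K := F), hm, ← pow_succ']
  have hdvd : (Nat.card F - 1 : ℤ) ∣ Nat.card F ^ (m + 4) - 1 := sub_one_dvd_pow_sub_one _ _
  have hP : 2 * Nat.card F + 1 < Nat.card F ^ (m + 4) := by
    have := Nat.pow_le_pow_right hq.le (Nat.le_add_left 4 m)
    nlinarith [Nat.pow_le_pow_left hq 3]
  set P := Nat.card F ^ (m + 4)
  set q := Nat.card F
  simp only [hd, h, hcard, Nat.cast_mul, mul_one] at hN hd' hs hΔs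
  have hN' : (finrank k V : ℤ) = d + P - 1 := by
    have : q * finrank k V + q = q * d + q * P := by
      exact_mod_cast (by linear_combination hN : (q * finrank k V + q : k) = q * d + q * P)
    have : q * (finrank k V + 1) = q * (d + P) := by linarith
    have := Nat.eq_of_mul_eq_mul_left (by lia) this
    lia
  have key := add_sub_one_mul_add_eq (by exact_mod_cast (by lia : q ≠ 0))
    (by exact_mod_cast (by lia : P ≠ 1)) hN hd' hΔs hs
  have hle : (q * (P - 1) : ℤ) ≤ (d + P - 1) * (q - 1) :=
    mul_sub_one_le_of_defect (Δ := Δ) (by exact_mod_cast hq) (by exact_mod_cast hP)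
      (by exact_mod_cast hdvd) (by lia) hΔ (by exact_mod_cast key)
  rw [hcard, hN']
  push_cast
  linarith

lemma exists_addChar_ne_one (A k : Type*) [AddCommGroup A] [Finite A] [Nontrivial A] [Field k]
    [CharZero k] [IsAlgClosed k] : ∃ ψ : AddChar A k, ψ ≠ 1 := by
  obtain ⟨a, ha⟩ := exists_ne (0 : A)
  obtain ⟨χ, hχ⟩ := CommGroup.exists_apply_ne_one_of_hasEnoughRootsOfUnity (Multiplicative A) k
    (a := .ofAdd a) (by simpa using ha)
  refine ⟨AddChar.toMonoidHomEquiv.symm ((Units.coeHom k).comp χ), AddChar.ne_one_iff.2 ⟨a, ?_⟩⟩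
  simpa using hχ

theorem natCard_sub_le_finrank_mul [σ.IsIrreducible] (hσ : σ ≠ 1) (hE : 5 ≤ finrank F E) :
    (Nat.card E - Nat.card F : ℤ) ≤ finrank k V * (Nat.card F - 1) := by
  obtain ⟨ψ, hψ⟩ := exists_addChar_ne_one F k
  have : Nontrivial E := Module.nontrivial_of_finrank_pos (R := F) (by lia)
  obtain ⟨x, hx⟩ := exists_ne (0 : E)
  obtain ⟨w, hxw⟩ := exists_linearIndependent_pair_of_one_lt_finrank (R := F) (by lia) hx
  obtain ⟨m, hm⟩ := exists_trace_weightProj_eq_natCast σ ψ x w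
  obtain rfl | rfl | hm2 : m = 0 ∨ m = 1 ∨ 2 ≤ m := by lia
  · exact absurd (eq_one_of_trace_weightProj_eq_zero hψ (by lia) hxw (by simpa using hm)) hσ
  · exact natCard_sub_le_finrank_mul_of_trace_eq_one hψ hE hxw (by simpa using hm)
  · obtain ⟨d, hd⟩ := exists_trace_weightProj_eq_natCast σ ψ x 0
    have hN := natCard_mul_finrank_eq (σ := σ) hψ (by lia) hxw
    rw [hm, hd] at hN
    have hN' : (Nat.card F * finrank k V : ℤ) =
        Nat.card F * d + (Nat.card E - Nat.card F) * m := by exact_mod_cast hN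
    have hq : 1 < Nat.card F := Finite.one_lt_card
    have hcard : Nat.card F ≤ Nat.card E := by
      rw [Module.natCard_eq_pow_finrank (K := F) (V := E)]
      exact Nat.le_self_pow (by lia) _
    zify at hq hcard hm2
    have hmul : (Nat.card E - Nat.card F : ℤ) * 2 ≤ Nat.card F * finrank k V := by
      rw [hN']
      nlinarith [mul_le_mul_of_nonneg_left hm2 (sub_nonneg.2 hcard)]
    nlinarith

end LowerBound

/-! ### The permutation representation -/

section Permutation

open scoped MonoidAlgebra

lemma isIrreducible_toRepresentation_of_isAtom {k G V : Type*} [Monoid G] [Field k]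
    [AddCommGroup V] [Module k V] {ρ : Representation k G V} {S : Subrepresentation ρ}
    (hS : IsAtom S) : S.toRepresentation.IsIrreducible where
  exists_pair_ne := by
    refine ⟨⊥, ⊤, fun h ↦ hS.1 <| Subrepresentation.toSubmodule_injective ?_⟩
    exact Submodule.subsingleton_iff_eq_bot.1 (Submodule.subsingleton_iff k |>.1
      (subsingleton_of_bot_eq_top (congrArg Subrepresentation.toSubmodule h)))
  eq_bot_or_eq_top W := by
    let W' : Subrepresentation ρ := ⟨W.toSubmodule.map S.toSubmodule.subtype, by
      rintro g _ ⟨v, hv, rfl⟩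
      exact ⟨_, W.apply_mem_toSubmodule g hv, rfl⟩⟩
    have hle : W' ≤ S := S.toSubmodule.map_subtype_le W.toSubmodule
    have hinj := Submodule.map_injective_of_injective S.toSubmodule.subtype_injective
    refine (hS.le_iff.1 hle).imp (fun h ↦ ?_) fun h ↦ ?_ <;>
      refine Subrepresentation.toSubmodule_injective (hinj ?_) <;>
      refine (congrArg Subrepresentation.toSubmodule h).trans ?_
    · exact (Submodule.map_bot _).symm
    · exact (Submodule.map_subtype_top _).symm

variable (k G X : Type*) [Field k] [Group G] [MulAction G X]

/-- The elements of coefficient sum zero in the permutation representation of `G` on `k[X]`. For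
finite `X`, these are the functions `X → k` of total sum zero. -/
noncomputable def sumZero : Subrepresentation (Representation.ofMulAction k G X) where
  toSubmodule := LinearMap.ker (MonoidAlgebra.basis X k).sumCoords
  apply_mem_toSubmodule g f hf := by
    have hg : (MonoidAlgebra.basis X k).sumCoords ∘ₗ Representation.ofMulAction k G X g =
        (MonoidAlgebra.basis X k).sumCoords :=
      (MonoidAlgebra.basis X k).ext fun x ↦ by
        rw [LinearMap.comp_apply, Basis.sumCoords_self_apply, MonoidAlgebra.basis_apply,
          Representation.ofMulAction_single, ← MonoidAlgebra.basis_apply,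
          Basis.sumCoords_self_apply]
    rwa [LinearMap.mem_ker, ← LinearMap.comp_apply, hg]

variable {k G X}

lemma mem_sumZero_iff [Fintype X] {f : k[X]} : f ∈ sumZero k G X ↔ ∑ x, f.coeff x = 0 := by
  refine LinearMap.mem_ker.trans ?_
  rw [Basis.coe_sumCoords_of_fintype, LinearMap.sum_apply]
  rfl

lemma single_sub_single_mem_sumZero (x y : X) :
    (MonoidAlgebra.single x 1 - MonoidAlgebra.single y 1 : k[X]) ∈ sumZero k G X := by
  refine LinearMap.mem_ker.2 ?_
  rw [← MonoidAlgebra.basis_apply, ← MonoidAlgebra.basis_apply, map_sub,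
    Basis.sumCoords_self_apply, Basis.sumCoords_self_apply, sub_self]

lemma sumZero_le_of_single_sub_single_mem
    {W : Subrepresentation (Representation.ofMulAction k G X)} {x : X}
    (hW : ∀ y, (MonoidAlgebra.single x 1 - MonoidAlgebra.single y 1 : k[X]) ∈ W) :
    sumZero k G X ≤ W := by
  intro f hf
  let b := MonoidAlgebra.basis X k
  have hle : ⊤ ≤ W.toSubmodule.comap
      (b.sumCoords.smulRight (MonoidAlgebra.single x 1 : k[X]) - LinearMap.id) := by
    rw [← b.span_eq, Submodule.span_le]
    rintro _ ⟨y, rfl⟩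
    have : b.sumCoords (b y) • MonoidAlgebra.single x (1 : k) - b y ∈ W := by
      rw [b.sumCoords_self_apply, one_smul]
      exact hW y
    exact this
  have hfW : b.sumCoords f • MonoidAlgebra.single x (1 : k) - f ∈ W.toSubmodule :=
    hle Submodule.mem_top
  rwa [LinearMap.mem_ker.1 hf, zero_smul, zero_sub, neg_mem_iff] at hfW

lemma finrank_sumZero [Fintype X] [Nonempty X] :
    finrank k (sumZero k G X).toSubmodule = Fintype.card X - 1 := by
  have hsum : (MonoidAlgebra.basis X k).sumCoords ≠ 0 := fun h ↦ by
    simpa [h] using (MonoidAlgebra.basis X k).sumCoords_self_apply (Classical.arbitrary X)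
  have := Module.Dual.finrank_ker_add_one_of_ne_zero hsum
  rw [finrank_eq_card_basis (MonoidAlgebra.basis X k)] at this
  exact Nat.eq_sub_of_add_eq this

lemma exists_mem_forall_stabilizer [Finite G]
    {W : Subrepresentation (Representation.ofMulAction k G X)} {f : k[X]} (hf : f ∈ W) (x : X) :
    ∃ u ∈ W, u.coeff x = Nat.card (MulAction.stabilizer G x) * f.coeff x ∧
      ∀ g ∈ MulAction.stabilizer G x, ∀ z, u.coeff (g • z) = u.coeff z := by
  classical
  have := Fintype.ofFinite (MulAction.stabilizer G x)
  have hcoeff (z) : (∑ g : MulAction.stabilizer G x,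
      Representation.ofMulAction k G X g⁻¹ f).coeff z =
        ∑ g : MulAction.stabilizer G x, f.coeff (g • z) := by
    rw [MonoidAlgebra.coeff_sum, Finsupp.finsetSum_apply]
    exact Finset.sum_congr rfl fun g _ ↦ by
      rw [Representation.coeff_ofMulAction, inv_inv, Subgroup.smul_def]
  refine ⟨∑ g : MulAction.stabilizer G x, Representation.ofMulAction k G X g⁻¹ f,
    W.toSubmodule.sum_mem fun g _ ↦ W.apply_mem_toSubmodule _ hf, ?_, fun h hh z ↦ ?_⟩
  · rw [hcoeff, Finset.sum_congr rfl fun g _ ↦ congrArg f.coeff g.2, Finset.sum_const,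
      nsmul_eq_mul, Finset.card_univ, Nat.card_eq_fintype_card]
  · rw [hcoeff, hcoeff]
    exact Fintype.sum_equiv (Equiv.mulRight ⟨h, hh⟩) _ _ fun g ↦ by simp [mul_smul]

lemma sub_ofMulAction_eq_smul_single_sub_single {u : k[X]} {x : X} {c : k}
    (hu : ∀ {z}, x ≠ z → u.coeff z = c) (g : G) :
    u - Representation.ofMulAction k G X g u = (u.coeff x - c) •
      (MonoidAlgebra.single x 1 - MonoidAlgebra.single (g • x) 1 : k[X]) := by
  classical
  ext z
  have hz : x = g⁻¹ • z ↔ g • x = z := eq_inv_smul_iff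
  have hval (t) : u.coeff t = if x = t then u.coeff x else c := by
    split_ifs with h
    exacts [h ▸ rfl, hu h]
  rw [MonoidAlgebra.coeff_sub, Finsupp.sub_apply, Representation.coeff_ofMulAction, hval z,
    hval (g⁻¹ • z)]
  simp only [hz, MonoidAlgebra.coeff_smul_apply, MonoidAlgebra.coeff_sub, Finsupp.sub_apply,
    MonoidAlgebra.coeff_single, Finsupp.single_apply, smul_eq_mul]
  split_ifs <;> ring

lemma single_sub_single_mem_of_coeff_ne_zero [Finite G] [CharZero k]
    [MulAction.IsMultiplyPretransitive G X 2]
    {W : Subrepresentation (Representation.ofMulAction k G X)} (hW : W ≤ sumZero k G X) {f : k[X]}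
    (hf : f ∈ W) {x : X} (hx : f.coeff x ≠ 0) (y : X) :
    (MonoidAlgebra.single x 1 - MonoidAlgebra.single y 1 : k[X]) ∈ W := by
  have := MulAction.isPretransitive_of_is_two_pretransitive (G := G) (α := X)
  have : Finite X := Finite.of_surjective _ (MulAction.surjective_smul G x)
  have := Fintype.ofFinite X
  rcases eq_or_ne x y with rfl | hxy
  · rw [sub_self]
    exact W.toSubmodule.zero_mem
  obtain ⟨u, huW, hux, hu⟩ := exists_mem_forall_stabilizer hf x
  have huy {z} (hz : x ≠ z) : u.coeff z = u.coeff y := by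
    obtain ⟨g, hgx, rfl⟩ := MulAction.is_two_pretransitive_iff.1 ‹_› hxy hz
    exact hu g hgx y
  have hux0 : u.coeff x ≠ 0 := hux ▸ mul_ne_zero (Nat.cast_ne_zero.2 Nat.card_pos.ne') hx
  have hne : u.coeff x - u.coeff y ≠ 0 := fun h ↦ by
    have hconst (z) : u.coeff z = u.coeff x :=
      (eq_or_ne x z).elim (fun h ↦ h ▸ rfl) fun hz ↦ (huy hz).trans (sub_eq_zero.1 h).symm
    have := mem_sumZero_iff.1 (hW huW)
    rw [Finset.sum_congr rfl fun z _ ↦ hconst z, Finset.sum_const, smul_eq_zero] at this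
    exact this.elim (@Fintype.card_ne_zero X _ ⟨x⟩) hux0
  obtain ⟨g, rfl⟩ := MulAction.exists_smul_eq G x y
  have hmem := W.toSubmodule.sub_mem huW (W.apply_mem_toSubmodule g huW)
  rw [sub_ofMulAction_eq_smul_single_sub_single huy] at hmem
  exact (W.toSubmodule.smul_mem_iff hne).1 hmem

theorem isAtom_sumZero [Finite G] [CharZero k] [Nontrivial X]
    [MulAction.IsMultiplyPretransitive G X 2] : IsAtom (sumZero k G X) := by
  refine ⟨fun h ↦ ?_, fun W hW ↦ ?_⟩
  · obtain ⟨x, y, hxy⟩ := exists_pair_ne X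
    have hbot : MonoidAlgebra.single x (1 : k) - MonoidAlgebra.single y 1 = 0 :=
      (Submodule.mem_bot k).1 (h.le (single_sub_single_mem_sumZero x y))
    exact hxy ((MonoidAlgebra.basis X k).injective (sub_eq_zero.1 hbot))
  by_contra hbot
  obtain ⟨f, hf, hf0⟩ := (Submodule.ne_bot_iff W.toSubmodule).1
    fun h ↦ hbot (Subrepresentation.toSubmodule_injective h)
  obtain ⟨x, hx⟩ : ∃ x, f.coeff x ≠ 0 := by
    contrapose! hf0
    exact MonoidAlgebra.coeff_injective (Finsupp.ext hf0)
  exact hW.not_ge (sumZero_le_of_single_sub_single_mem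
    (single_sub_single_mem_of_coeff_ne_zero hW.le hf hx))

lemma toRepresentation_sumZero_ne_one [NeZero (2 : k)] [Nontrivial X]
    [MulAction.IsPretransitive G X] : (sumZero k G X).toRepresentation ≠ 1 := by
  classical
  intro h
  obtain ⟨x, y, hxy⟩ := exists_pair_ne X
  obtain ⟨g, rfl⟩ := MulAction.exists_smul_eq G x y
  let v : k[X] := MonoidAlgebra.single x 1 - MonoidAlgebra.single (g • x) 1
  have hfix : Representation.ofMulAction k G X g v = v := congrArg Subtype.val
    (LinearMap.congr_fun (DFunLike.congr_fun h g) ⟨v, single_sub_single_mem_sumZero x (g • x)⟩)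
  have hval := congrArg (fun f : k[X] ↦ f.coeff (g • x)) hfix
  rw [Representation.coeff_ofMulAction, inv_smul_smul] at hval
  simp only [v, MonoidAlgebra.coeff_sub, Finsupp.sub_apply, MonoidAlgebra.coeff_single,
    Finsupp.single_eq_same, Finsupp.single_eq_of_ne hxy, Finsupp.single_eq_of_ne hxy.symm] at hval
  exact two_ne_zero (α := k) (by linear_combination hval)

end Permutation

section MatrixRepresentation

variable {G : Type*} [Group G] {N : ℕ}

/-- The linear representation on column vectors afforded by a matrix representation. -/
noncomputable def mulVecRepresentation (ρ : G →* GL (Fin N) ℂ) :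
    Representation ℂ G (Fin N → ℂ) :=
  (Matrix.toLinAlgEquiv' : Matrix (Fin N) (Fin N) ℂ ≃ₐ[ℂ] _).toAlgHom.toMonoidHom.comp
    ((Units.coeHom _).comp ρ)

lemma mulVecRepresentation_ne_one {ρ : G →* GL (Fin N) ℂ} (hρ : ρ ≠ 1) :
    mulVecRepresentation ρ ≠ 1 := fun h ↦ hρ <| MonoidHom.ext fun g ↦ Units.ext <|
  Matrix.toLinAlgEquiv'.injective ((DFunLike.congr_fun h g).trans (map_one _).symm)

lemma isIrreducible_mulVecRepresentation {ρ : G →* GL (Fin N) ℂ} (hρ : IrredMat ρ)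
    (hρ1 : ρ ≠ 1) : (mulVecRepresentation ρ).IsIrreducible where
  exists_pair_ne := by
    refine ⟨⊥, ⊤, fun h ↦ mulVecRepresentation_ne_one hρ1 ?_⟩
    have : Subsingleton (Fin N → ℂ) := Submodule.subsingleton_iff ℂ |>.1
      (subsingleton_of_bot_eq_top (congrArg Subrepresentation.toSubmodule h))
    exact MonoidHom.ext fun g ↦ LinearMap.ext fun v ↦ Subsingleton.elim _ _
  eq_bot_or_eq_top W :=
    (hρ W.toSubmodule fun g v hv ↦ W.apply_mem_toSubmodule g hv).imp
      (fun h ↦ Subrepresentation.toSubmodule_injective h)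
      fun h ↦ Subrepresentation.toSubmodule_injective h

lemma exists_irredMat_of_isIrreducible {V : Type*} [AddCommGroup V] [Module ℂ V]
    [FiniteDimensional ℂ V] {σ : Representation ℂ G V} [σ.IsIrreducible] (hσ : σ ≠ 1) :
    ∃ ρ : G →* GL (Fin (finrank ℂ V)) ℂ, IrredMat ρ ∧ ρ ≠ 1 := by
  let b := finBasis ℂ V
  let ρ := ((LinearMap.toMatrixAlgEquiv b).toAlgHom.toMonoidHom.comp σ).toHomUnits
  refine ⟨ρ, fun W hW ↦ ?_, fun h ↦ hσ ?_⟩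
  · let W' : Subrepresentation σ := ⟨W.comap b.equivFun.toLinearMap, fun g v hv ↦ by
      have hact : (ρ g : Matrix _ _ ℂ) *ᵥ b.equivFun v = b.equivFun (σ g v) :=
        LinearMap.toMatrix_mulVec_repr b b (σ g) v
      exact (congrArg (· ∈ W) hact).mp (hW g _ hv)⟩
    have hinj := Submodule.comap_injective_of_surjective b.equivFun.surjective
    refine (eq_bot_or_eq_top W').imp (fun h ↦ hinj ?_) fun h ↦ hinj ?_
    · exact (congrArg Subrepresentation.toSubmodule h).trans b.equivFun.ker.symm
    · exact congrArg Subrepresentation.toSubmodule h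
  · refine MonoidHom.ext fun g ↦ (LinearMap.toMatrixAlgEquiv b).injective ?_
    exact (congrArg Units.val (DFunLike.congr_fun h g)).trans (map_one _).symm

lemma irredMat_comp {H : Type*} [Group H] {ρ : G →* GL (Fin N) ℂ} (hρ : IrredMat ρ) {φ : H →* G}
    (hφ : Function.Surjective φ) : IrredMat (ρ.comp φ) := fun W hW ↦
  hρ W (hφ.forall.2 hW)

theorem exists_irredMat_natCard_sub_one (G X : Type*) [Group G] [Finite G] [MulAction G X]
    [Nontrivial X] [MulAction.IsMultiplyPretransitive G X 2] :
    ∃ ρ : G →* GL (Fin (Nat.card X - 1)) ℂ, IrredMat ρ ∧ ρ ≠ 1 := by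
  have := MulAction.isPretransitive_of_is_two_pretransitive (G := G) (α := X)
  have : Finite X := Finite.of_surjective _ (MulAction.surjective_smul G (Classical.arbitrary X))
  have := Fintype.ofFinite X
  have := isIrreducible_toRepresentation_of_isAtom (isAtom_sumZero (k := ℂ) (G := G) (X := X))
  rw [Nat.card_eq_fintype_card, ← finrank_sumZero (k := ℂ) (G := G)]
  exact exists_irredMat_of_isIrreducible toRepresentation_sumZero_ne_one

end MatrixRepresentation

section SpecialLinearGroup

open scoped LinearAlgebra.Projectivization

theorem natCard_sub_div_le_of_irredMat {F : Type*} [Field F] [Finite F] {n N : ℕ} (hn : 5 ≤ n)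
    {ρ : Matrix.SpecialLinearGroup (Fin n) F →* GL (Fin N) ℂ} (hρ : IrredMat ρ) (hρ1 : ρ ≠ 1) :
    (Nat.card F ^ n - Nat.card F) / (Nat.card F - 1) ≤ N := by
  let e := Matrix.SpecialLinearGroup.toLin'_equiv (n := Fin n) (R := F)
  have hρe : IrredMat (ρ.comp e.symm.toMonoidHom) := irredMat_comp hρ e.symm.surjective
  have hρe1 : ρ.comp e.symm.toMonoidHom ≠ 1 := fun h ↦
    hρ1 ((MonoidHom.cancel_right e.symm.surjective).1 (h.trans (MonoidHom.one_comp _).symm))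
  have := isIrreducible_mulVecRepresentation hρe hρe1
  have hle := natCard_sub_le_finrank_mul (mulVecRepresentation_ne_one hρe1)
    (hn.trans_eq (finrank_fin_fun F).symm)
  rw [finrank_fin_fun, Nat.card_fun, Nat.card_fin] at hle
  refine Nat.div_le_of_le_mul ?_
  have hF : 1 < Nat.card F := Finite.one_lt_card
  push_cast at hle
  zify [hF.le, Nat.le_self_pow (show n ≠ 0 by lia) (Nat.card F)]
  linarith

lemma natCard_projectivization_sub_one (F V : Type*) [Field F] [Finite F] [AddCommGroup V]
    [Module F V] [Finite V] :
    Nat.card (ℙ F V) - 1 = (Nat.card V - Nat.card F) / (Nat.card F - 1) := by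
  have hF : 1 < Nat.card F := Finite.one_lt_card
  refine (Nat.div_eq_of_eq_mul_left (Nat.sub_pos_of_lt hF) ?_).symm
  rw [Projectivization.card' F V, Nat.sub_mul, one_mul]
  omega

lemma nontrivial_projectivization {F V : Type*} [Field F] [AddCommGroup V] [Module F V]
    (hV : 1 < finrank F V) : Nontrivial (ℙ F V) := by
  have : Nontrivial V := Module.nontrivial_of_finrank_pos (R := F) (by lia)
  obtain ⟨v, hv⟩ := exists_ne (0 : V)
  obtain ⟨w, hvw⟩ := exists_linearIndependent_pair_of_one_lt_finrank hV hv
  exact ⟨_, _, (Projectivization.independent_pair_iff_ne _ _).1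
    ((Projectivization.independent_mk_iff_LinearIndependent hv (hvw.ne_zero 1)).2 hvw)⟩

end SpecialLinearGroup

end TiepZalesskii

open TiepZalesskii in
theorem minimal_dim_nontrivial_irreducible_SL_mod_p_general (F : Type*) [Field F] [Finite F]
    {n : ℕ} (hn : 5 ≤ n) :
    (∀ (N : ℕ) (ρ : Matrix.SpecialLinearGroup (Fin n) F →* GL (Fin N) ℂ),
        IrredMat ρ → ρ ≠ 1 → (Nat.card F ^ n - Nat.card F) / (Nat.card F - 1) ≤ N) ∧
    ∃ ρ : Matrix.SpecialLinearGroup (Fin n) F →*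
        GL (Fin ((Nat.card F ^ n - Nat.card F) / (Nat.card F - 1))) ℂ,
      IrredMat ρ ∧ ρ ≠ 1 := by
  refine ⟨fun N ρ ↦ natCard_sub_div_le_of_irredMat hn, ?_⟩
  have : Nontrivial (Projectivization F (Fin n → F)) :=
    nontrivial_projectivization (by rw [Module.finrank_fin_fun]; lia)
  have hcard := natCard_projectivization_sub_one F (Fin n → F)
  rw [Nat.card_fun, Nat.card_fin] at hcard
  rw [← hcard]
  exact exists_irredMat_natCard_sub_one (Matrix.SpecialLinearGroup (Fin n) F)
    (Projectivization F (Fin n → F))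

/-- **Tiep–Zalesskii.**  For a prime `p` and `n ≥ 5`, the smallest dimension of a
nontrivial irreducible complex representation of `SL_n(ℤ/pℤ)` is `(p^n − p)/(p − 1)`:
every nontrivial irreducible representation has at least this dimension, and there is
an irreducible nontrivial representation of exactly this dimension. -/
theorem minimal_dim_nontrivial_irreducible_SL_mod_p (p n : ℕ) (hp : p.Prime) (hn : 5 ≤ n) :
    (∀ (N : ℕ) (ρ : Matrix.SpecialLinearGroup (Fin n) (ZMod p) →* GL (Fin N) ℂ),
        IrredMat ρ → ρ ≠ 1 → (p ^ n - p) / (p - 1) ≤ N) ∧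
    ∃ ρ : Matrix.SpecialLinearGroup (Fin n) (ZMod p) →*
        GL (Fin ((p ^ n - p) / (p - 1))) ℂ,
      IrredMat ρ ∧ ρ ≠ 1 := by
  have := Fact.mk hp
  have h := minimal_dim_nontrivial_irreducible_SL_mod_p_general (ZMod p) hn
  rwa [Nat.card_zmod] at h
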